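/- arXiv:1809.03049 — 3 statements merged into one kernel-verified Lean document; each statement's English description precedes it below -/
import Mathlib

section
/- For every rational number q ≥ 1, there exists a finite connected simple graph G such that z(G) / c(G) = q, i.e., z(G) = q · c(G). -/
open SimpleGraph

/-! ### Pursuit games on graphs

A round of the game is recorded as a pair `(c, r)` where `c : Fin k → V` is the
configuration of the `k` pursuers (cops or zombies) and `r : V` the position of the
evader (robber or survivor).  In a round the pursuers move first (knowing the full
history), then the evader moves (knowing the full history and the pursuers' new
configuration).  Strategies are functions of the full history, so no generality is lost. -/

/-- The history of a play: the list of (pursuer configuration, evader position) pairs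
for the completed rounds so far. -/
abbrev GameHist (V : Type*) (k : ℕ) := List ((Fin k → V) × V)

/-- The history determined by the sequences `c` (pursuer configurations) and `r`
(evader positions), recording rounds `0, …, n-1`. -/
def histUpTo {V : Type*} {k : ℕ} (c : ℕ → Fin k → V) (r : ℕ → V) (n : ℕ) : GameHist V k :=
  (List.range n).map fun i => (c i, r i)

/-- The robber/survivor always moves along an edge or stays still. -/
def RobberLegal {V : Type*} (G : SimpleGraph V) (r : ℕ → V) : Prop :=
  ∀ n, r (n+1) = r n ∨ G.Adj (r n) (r (n+1))

/-- At step `n`, each cop stays still or moves along an edge. -/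
def CopStepLegal {V : Type*} (G : SimpleGraph V) {k : ℕ} (c : ℕ → Fin k → V) (n : ℕ) : Prop :=
  ∀ i, c (n+1) i = c n i ∨ G.Adj (c n i) (c (n+1) i)

/-- At step `n`, each zombie moves along an edge to a vertex strictly closer to the
survivor's current position `r n`. -/
def ZombieStepLegal {V : Type*} (G : SimpleGraph V) {k : ℕ} (c : ℕ → Fin k → V) (r : ℕ → V)
    (n : ℕ) : Prop :=
  ∀ i, G.Adj (c n i) (c (n+1) i) ∧ G.dist (c (n+1) i) (r n) < G.dist (c n i) (r n)

/-- The pursuers follow the history-dependent strategy `mv`: their configuration at time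
`n+1` is the strategy applied to the history of rounds `0, …, n`. -/
def FollowsStrat {V : Type*} {k : ℕ} (mv : GameHist V k → Fin k → V)
    (c : ℕ → Fin k → V) (r : ℕ → V) : Prop :=
  ∀ n, c (n+1) = mv (histUpTo c r (n+1))

/-- Starting from the cop configuration `cpos` (the robber then chooses any starting
vertex, and the cops move first), the cops have a strategy catching the robber: in every
play consistent with the strategy there is a time at which some cop and the robber occupy
the same vertex, all cop moves made up to and including the capturing move being legal. -/
def CopsCatchFrom {V : Type*} (G : SimpleGraph V) {k : ℕ} (cpos : Fin k → V) : Prop :=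
  ∃ mv : GameHist V k → Fin k → V,
    ∀ (c : ℕ → Fin k → V) (r : ℕ → V),
      c 0 = cpos → FollowsStrat mv c r → RobberLegal G r →
      ∃ n, ((∃ i, c n i = r n) ∧ ∀ m < n, CopStepLegal G c m) ∨
           ((∃ i, c (n+1) i = r n) ∧ ∀ m ≤ n, CopStepLegal G c m)

/-- `k` cops have a winning strategy on `G`. -/
def CopsWinWith {V : Type*} (G : SimpleGraph V) (k : ℕ) : Prop :=
  ∃ cpos : Fin k → V, CopsCatchFrom G cpos

/-- The cop number of `G`: the least `k` such that `k` cops have a winning strategy. -/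
noncomputable def copNumber {V : Type*} (G : SimpleGraph V) : ℕ :=
  sInf {k | CopsWinWith G k}

/-- Starting from the zombie configuration `zpos` and survivor position `spos`, with the
zombies to move, the zombies have a strategy catching the survivor: in every play
consistent with the strategy there is a time at which some zombie and the survivor occupy
the same vertex, all zombie moves made up to and including the capturing move being legal
(each zombie moves along an edge, strictly decreasing its distance to the survivor). -/
def ZombiesCatchFrom {V : Type*} (G : SimpleGraph V) {k : ℕ} (zpos : Fin k → V) (spos : V) :
    Prop :=
  ∃ mv : GameHist V k → Fin k → V,
    ∀ (c : ℕ → Fin k → V) (r : ℕ → V),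
      c 0 = zpos → r 0 = spos → FollowsStrat mv c r → RobberLegal G r →
      ∃ n, ((∃ i, c n i = r n) ∧ ∀ m < n, ZombieStepLegal G c r m) ∨
           ((∃ i, c (n+1) i = r n) ∧ ∀ m ≤ n, ZombieStepLegal G c r m)

/-- `k` zombies have a winning strategy on `G`: they can choose starting vertices so that
wherever the survivor starts, they catch the survivor. -/
def ZombiesWinWith {V : Type*} (G : SimpleGraph V) (k : ℕ) : Prop :=
  ∃ zpos : Fin k → V, ∀ spos : V, ZombiesCatchFrom G zpos spos

/-- The zombie number of `G`: the least `k` such that `k` zombies have a winning strategy. -/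
noncomputable def zombieNumber {V : Type*} (G : SimpleGraph V) : ℕ :=
  sInf {k | ZombiesWinWith G k}

/-- Starting from the zombie configuration `zpos` and survivor position `spos`, with the
zombies to move, the survivor has a strategy evading capture forever: in every play where
the survivor follows the strategy and the zombies move legally, the survivor's moves are
legal and no zombie ever occupies the survivor's vertex. -/
def SurvivorEvadesFrom {V : Type*} (G : SimpleGraph V) {k : ℕ} (zpos : Fin k → V) (spos : V) :
    Prop :=
  ∃ mv : GameHist V k → (Fin k → V) → V,
    ∀ (c : ℕ → Fin k → V) (r : ℕ → V),
      c 0 = zpos → r 0 = spos →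
      (∀ n, r (n+1) = mv (histUpTo c r (n+1)) (c (n+1))) →
      (∀ n, ZombieStepLegal G c r n) →
      RobberLegal G r ∧ ∀ n, (∀ i, c n i ≠ r n) ∧ (∀ i, c (n+1) i ≠ r n)

/-- Zombie-move legality in the variant where in each round the survivor moves first:
at step `n` each zombie moves along an edge, strictly decreasing its distance to the
survivor's current position `r (n+1)`. -/
def ZombieStepLegalAfter {V : Type*} (G : SimpleGraph V) {k : ℕ} (c : ℕ → Fin k → V)
    (r : ℕ → V) (n : ℕ) : Prop :=
  ∀ i, G.Adj (c n i) (c (n+1) i) ∧ G.dist (c (n+1) i) (r (n+1)) < G.dist (c n i) (r (n+1))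

/-- Starting from the zombie configuration `zpos` and survivor position `spos`, with the
survivor to move (the zombies then responding each round), the zombies have a strategy
catching the survivor. -/
def ZombiesCatchFromSurvivorToMove {V : Type*} (G : SimpleGraph V) {k : ℕ}
    (zpos : Fin k → V) (spos : V) : Prop :=
  ∃ mv : GameHist V k → V → Fin k → V,
    ∀ (c : ℕ → Fin k → V) (r : ℕ → V),
      c 0 = zpos → r 0 = spos →
      (∀ n, c (n+1) = mv (histUpTo c r (n+1)) (r (n+1))) →
      RobberLegal G r →
      ∃ n, (∃ i, c 0 i = r 0) ∨
           ((∃ i, c n i = r (n+1)) ∧ ∀ m < n, ZombieStepLegalAfter G c r m) ∨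
           ((∃ i, c (n+1) i = r (n+1)) ∧ ∀ m ≤ n, ZombieStepLegalAfter G c r m)

/-! ### The graphs `T_x`, the arm graphs `A_n`, and attaching an arm to a graph -/

/-- `|i - j| = 1 or 4` for `i j : Fin 5`, i.e. `i` and `j` are cyclically consecutive. -/
def fin5adj (i j : Fin 5) : Prop :=
  ((i : ℕ) + 1) % 5 = (j : ℕ) ∨ ((j : ℕ) + 1) % 5 = (i : ℕ)

/-- The vertices of the arm graph `A_n`: the vertex `b₂⁻¹` (`start`), the vertex `b₀ⁿ`
(`finish`), and for each copy `T_x` (`x : Fin n`) the inside vertices `a_i^x`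
(`inner x i`), the outside vertices `b_i^x` (`outer x i`) and the center `c^x`
(`center x`). -/
inductive ArmVert (n : ℕ) : Type
  | start : ArmVert n
  | finish : ArmVert n
  | inner : Fin n → Fin 5 → ArmVert n
  | outer : Fin n → Fin 5 → ArmVert n
  | center : Fin n → ArmVert n
  deriving DecidableEq

/-- One direction of the edge relation of the arm graph `A_n`. -/
def armRel (n : ℕ) : ArmVert n → ArmVert n → Prop
  | .inner x i, .inner y j => x = y ∧ fin5adj i j
  | .outer x i, .outer y j => (x = y ∧ fin5adj i j) ∨ ((x : ℕ) + 1 = (y : ℕ) ∧ (i : ℕ) = 2 ∧ (j : ℕ) = 0)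
  | .inner x i, .outer y j => x = y ∧ (i = j ∨ fin5adj i j)
  | .inner x _, .center y => x = y
  | .start, .outer y j => (y : ℕ) = 0 ∧ (j : ℕ) = 0
  | .outer x i, .finish => (x : ℕ) + 1 = n ∧ (i : ℕ) = 2
  | .start, .finish => n = 0
  | _, _ => False

/-- The arm graph `A_n`. -/
def armGraph (n : ℕ) : SimpleGraph (ArmVert n) := SimpleGraph.fromRel (armRel n)

/-- The index of the copy `T_x` containing a vertex of `A_n` (if any). -/
def copyIdx {n : ℕ} : ArmVert n → Option (Fin n)
  | .inner x _ => some x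
  | .outer x _ => some x
  | .center x => some x
  | _ => none

/-- The vertex `b₀ˣ` of `A_n` (for `x = n` this is the final vertex `b₀ⁿ`). -/
def b0 (n x : ℕ) : ArmVert n :=
  if h : x < n then ArmVert.outer ⟨x, h⟩ 0 else ArmVert.finish

/-- The vertex `b₂^{x-1}` of `A_n` (for `x = 0` this is the vertex `b₂⁻¹`). -/
def b2prev (n x : ℕ) : ArmVert n :=
  if h : 1 ≤ x ∧ x - 1 < n then ArmVert.outer ⟨x - 1, h.2⟩ 2 else ArmVert.start

/-- The vertex lies in the copy `T_x`. -/
def InCopy {W : Type*} {n : ℕ} (x : ℕ) (u : W ⊕ ArmVert n) : Prop :=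
  ∃ (a : ArmVert n) (y : Fin n), u = Sum.inr a ∧ copyIdx a = some y ∧ (y : ℕ) = x

/-- One direction of the edge relation of the graph obtained from a graph `H` and the
arm `A_n` by adding an edge from the vertex `b₂⁻¹` of `A_n` to the vertex `v` of `H`. -/
def combRel {W : Type*} (H : SimpleGraph W) (v : W) (n : ℕ) :
    (W ⊕ ArmVert n) → (W ⊕ ArmVert n) → Prop
  | Sum.inl w, Sum.inl w' => H.Adj w w'
  | Sum.inr a, Sum.inr a' => (armGraph n).Adj a a'
  | Sum.inl w, Sum.inr a => w = v ∧ a = ArmVert.start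
  | _, _ => False

/-- The graph obtained from `H` and the arm `A_n` by adding an edge from the vertex
`b₂⁻¹` of `A_n` to the vertex `v` of `H`. -/
def combGraph {W : Type*} (H : SimpleGraph W) (v : W) (n : ℕ) :
    SimpleGraph (W ⊕ ArmVert n) :=
  SimpleGraph.fromRel (combRel H v n)

/-! ### The graphs `Z_{k,m}(H)` -/

/-- The vertices of `Z_{k,m}(H)` where `H` has vertex type `W` and `p = 4*(m-k)`:
the vertices of `H`, for each vertex of `H` a path on `p` vertices, and for each
vertex of `H` `m` copies of the arm graph `A_p`. -/
abbrev ZVert (W : Type*) (m p : ℕ) : Type _ := W ⊕ (W × Fin p) ⊕ (W × Fin m × ArmVert p)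

/-- One direction of the edge relation of `Z_{k,m}(H)`. -/
def zRel {W : Type*} (H : SimpleGraph W) (m p : ℕ) : ZVert W m p → ZVert W m p → Prop
  | Sum.inl w, Sum.inl w' => H.Adj w w'
  | Sum.inl w, Sum.inr (Sum.inl (w', j)) => w = w' ∧ (j : ℕ) = 0
  | Sum.inr (Sum.inl (w, j)), Sum.inr (Sum.inl (w', j')) => w = w' ∧ (j : ℕ) + 1 = (j' : ℕ)
  | Sum.inl w, Sum.inr (Sum.inr (w', _, a)) => w = w' ∧ a = ArmVert.start
  | Sum.inr (Sum.inr (w, i, a)), Sum.inr (Sum.inr (w', i', a')) =>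
      w = w' ∧ i = i' ∧ (armGraph p).Adj a a'
  | _, _ => False

/-- The graph `Z_{k,m}(H)`: to each vertex `v` of `H` we attach (by an edge from `v` to
the first path vertex, resp. to `b₂⁻¹`) one path on `4*(m-k)` vertices and `m` copies of
the arm graph `A_{4*(m-k)}`. -/
def ZGraph {W : Type*} (H : SimpleGraph W) (k m : ℕ) :
    SimpleGraph (ZVert W m (4 * (m - k))) :=
  SimpleGraph.fromRel (zRel H m (4 * (m - k)))

/-! ### Hypercubes and block intersection graphs -/

/-- The `n`-dimensional hypercube: vertices are `Fin n → Bool`, two vertices being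
adjacent exactly when they differ in exactly one coordinate. -/
def hypercube (n : ℕ) : SimpleGraph (Fin n → Bool) :=
  SimpleGraph.fromRel fun x y => ∃ i, x i ≠ y i ∧ ∀ j, j ≠ i → x j = y j

/-- `(P, B)` is a balanced incomplete block design with parameters `(v, k, 1)`:
`P` has `v` points, every block has `k` points, and every pair of distinct points lies
in exactly one block. -/
def IsBIBD (P : Type*) (B : Finset (Finset P)) (v k : ℕ) : Prop :=
  Nat.card P = v ∧ (∀ b ∈ B, b.card = k) ∧
    ∀ p q : P, p ≠ q → ∃! b : Finset P, b ∈ B ∧ p ∈ b ∧ q ∈ b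

/-- The block intersection graph of a collection `B` of blocks: vertices are the blocks,
two distinct blocks being adjacent exactly when they intersect. -/
def blockGraph {P : Type*} (B : Finset (Finset P)) : SimpleGraph {b // b ∈ B} :=
  SimpleGraph.fromRel fun b b' => ∃ p, p ∈ b.val ∧ p ∈ b'.val

/-! ### Zombie-good positions on a graph with an attached arm -/

/-- A position (with the zombies to move) in the game on the graph obtained by attaching
the arm `A_n` to `H` at `v` is `x`-zombie-good if: the survivor is in some `T_y` with
`y ≥ x` or at `b₀ⁿ`; for some `i ≥ 1` the zombies `z_1, …, z_i` are all at `b₀ˣ`; the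
remaining zombies are in `H ∪ {b₂⁻¹} ∪ T_0 ∪ ⋯ ∪ T_{x-1}`; consecutive zombie distances
to the survivor satisfy `0 ≤ d_{j+1} - d_j ≤ 4`; and `d_m - d_1 ≥ n - x`. -/
def ZombieGood {W : Type*} (H : SimpleGraph W) (v : W) (n m x : ℕ)
    (zpos : Fin m → (W ⊕ ArmVert n)) (spos : W ⊕ ArmVert n) : Prop :=
  (∃ a : ArmVert n, spos = Sum.inr a ∧
      ((∃ y : Fin n, copyIdx a = some y ∧ x ≤ (y : ℕ)) ∨ a = ArmVert.finish)) ∧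
  (∃ i : ℕ, 1 ≤ i ∧ i ≤ m ∧
      (∀ j : Fin m, (j : ℕ) < i → zpos j = Sum.inr (b0 n x)) ∧
      (∀ j : Fin m, i ≤ (j : ℕ) →
        (∃ w, zpos j = Sum.inl w) ∨ zpos j = Sum.inr ArmVert.start ∨
          (∃ (a : ArmVert n) (y : Fin n), zpos j = Sum.inr a ∧ copyIdx a = some y ∧ (y : ℕ) < x))) ∧
  (∀ j : Fin m, ∀ h : (j : ℕ) + 1 < m,
      (combGraph H v n).dist spos (zpos j) ≤ (combGraph H v n).dist spos (zpos ⟨(j : ℕ) + 1, h⟩) ∧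
      (combGraph H v n).dist spos (zpos ⟨(j : ℕ) + 1, h⟩) - (combGraph H v n).dist spos (zpos j) ≤ 4) ∧
  (∀ hm : 1 ≤ m,
      n - x ≤ (combGraph H v n).dist spos (zpos ⟨m - 1, by omega⟩) -
        (combGraph H v n).dist spos (zpos ⟨0, by omega⟩))
/-! ### Generic lemmas on pursuit games -/

section Generic
variable {V : Type} {n : ℕ}

/-- One legal zombie step. -/
def ZStep (G : SimpleGraph V) (c : Fin n → V) (r : V) (c' : Fin n → V) : Prop :=
  ∀ i, G.Adj (c i) (c' i) ∧ G.dist (c' i) r < G.dist (c i) r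

/-- One legal cop step. -/
def CStep (G : SimpleGraph V) (c : Fin n → V) (_ : V) (c' : Fin n → V) : Prop :=
  ∀ i, c' i = c i ∨ G.Adj (c i) (c' i)

/-- The pursuers win within `m` rounds. -/
def WinIn (G : SimpleGraph V) (step : (Fin n → V) → V → (Fin n → V) → Prop) :
    ℕ → (Fin n → V) → V → Prop
  | 0, c, r => ∃ i, c i = r
  | m+1, c, r => (∃ i, c i = r) ∨ ∃ c', step c r c' ∧
      ((∃ i, c' i = r) ∨ ∀ r', (r' = r ∨ G.Adj r r') → WinIn G step m c' r')

/-- The pursuers win. -/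
def Win (G : SimpleGraph V) (step : (Fin n → V) → V → (Fin n → V) → Prop)
    (c : Fin n → V) (r : V) : Prop := ∃ m, WinIn G step m c r

variable {G : SimpleGraph V} {step : (Fin n → V) → V → (Fin n → V) → Prop}

theorem WinIn.mono {m m' : ℕ} (h : m ≤ m') {c : Fin n → V} {r : V}
    (hw : WinIn G step m c r) : WinIn G step m' c r := by
  induction m' generalizing m c r with
  | zero =>
    obtain rfl : m = 0 := by omega
    exact hw
  | succ m' ih =>
    cases m with
    | zero => exact Or.inl hw
    | succ m =>
      rcases hw with hw | ⟨c', hs, hc⟩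
      · exact Or.inl hw
      · refine Or.inr ⟨c', hs, ?_⟩
        rcases hc with hc | hc
        · exact Or.inl hc
        · exact Or.inr fun r' hr' => ih (by omega) (hc r' hr')

theorem Win.caught {c : Fin n → V} {r : V} (i : Fin n) (h : c i = r) : Win G step c r :=
  ⟨0, i, h⟩

theorem Win.capture {c c' : Fin n → V} {r : V} (hs : step c r c') (i : Fin n) (h : c' i = r) :
    Win G step c r :=
  ⟨1, Or.inr ⟨c', hs, Or.inl ⟨i, h⟩⟩⟩

theorem Win.move [Finite V] {c c' : Fin n → V} {r : V} (hs : step c r c')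
    (h : ∀ r', (r' = r ∨ G.Adj r r') → Win G step c' r') : Win G step c r := by
  have := Fintype.ofFinite V
  have h2 : ∀ r', ∃ m, (r' = r ∨ G.Adj r r') → WinIn G step m c' r' := by
    intro r'
    by_cases hr : r' = r ∨ G.Adj r r'
    · obtain ⟨m, hm⟩ := h r' hr
      exact ⟨m, fun _ => hm⟩
    · exact ⟨0, fun h => absurd h hr⟩
  choose f hf using h2
  refine ⟨Finset.univ.sup f + 1, Or.inr ⟨c', hs, Or.inr fun r' hr' => ?_⟩⟩
  exact (hf r' hr').mono (Finset.le_sup (Finset.mem_univ r'))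

/-- The least number of rounds needed. -/
noncomputable def gameRank (G : SimpleGraph V) (step : (Fin n → V) → V → (Fin n → V) → Prop)
    (c : Fin n → V) (r : V) : ℕ := sInf {m | WinIn G step m c r}

/-- A good move of the pursuers. -/
def GoodMove (G : SimpleGraph V) (step : (Fin n → V) → V → (Fin n → V) → Prop)
    (c : Fin n → V) (r : V) (c' : Fin n → V) : Prop :=
  step c r c' ∧ ((∃ i, c' i = r) ∨
    ∀ r', (r' = r ∨ G.Adj r r') → WinIn G step (gameRank G step c r - 1) c' r')

open Classical in
/-- A positional strategy. -/
noncomputable def bestMove (G : SimpleGraph V) (step : (Fin n → V) → V → (Fin n → V) → Prop)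
    (c : Fin n → V) (r : V) : Fin n → V :=
  if h : ∃ c', GoodMove G step c r c' then h.choose else c

theorem bestMove_spec {m : ℕ} {c : Fin n → V} {r : V} (hw : WinIn G step m c r)
    (hc : ¬ ∃ i, c i = r) :
    1 ≤ m ∧ gameRank G step c r ≤ m ∧ 1 ≤ gameRank G step c r ∧
      GoodMove G step c r (bestMove G step c r) := by
  have hmem : WinIn G step (gameRank G step c r) c r := Nat.sInf_mem (s := {m | WinIn G step m c r}) ⟨m, hw⟩
  have hle : gameRank G step c r ≤ m := Nat.sInf_le (s := {m | WinIn G step m c r}) hw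
  have hpos : 1 ≤ gameRank G step c r := by
    by_contra h
    have h0 : gameRank G step c r = 0 := by omega
    rw [h0] at hmem
    exact hc hmem
  refine ⟨by omega, hle, hpos, ?_⟩
  have hex : ∃ c', GoodMove G step c r c' := by
    obtain ⟨k, hk⟩ : ∃ k, gameRank G step c r = k + 1 := ⟨gameRank G step c r - 1, by omega⟩
    rw [hk] at hmem
    rcases hmem with h | ⟨c', hs, h⟩
    · exact absurd h hc
    · refine ⟨c', hs, ?_⟩
      rw [hk]
      exact h
  unfold bestMove
  rw [dif_pos hex]
  exact hex.choose_spec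

theorem win_play (m : ℕ) (c : ℕ → Fin n → V) (r : ℕ → V)
    (hw : WinIn G step m (c 0) (r 0)) (hmv : ∀ t, c (t+1) = bestMove G step (c t) (r t))
    (hr : RobberLegal G r) :
    ∃ t, ((∃ i, c t i = r t) ∧ ∀ s < t, step (c s) (r s) (c (s+1))) ∨
         ((∃ i, c (t+1) i = r t) ∧ ∀ s ≤ t, step (c s) (r s) (c (s+1))) := by
  induction m using Nat.strong_induction_on generalizing c r with
  | _ m ih =>
  by_cases hc : ∃ i, c 0 i = r 0
  · exact ⟨0, Or.inl ⟨hc, fun s hs => by omega⟩⟩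
  obtain ⟨h1, h2, h3, hs, hg⟩ := bestMove_spec hw hc
  rw [← hmv 0] at hs hg
  rcases hg with hg | hg
  · refine ⟨0, Or.inr ⟨hg, fun s hs' => ?_⟩⟩
    obtain rfl : s = 0 := by omega
    exact hs
  · obtain ⟨t, ht⟩ := ih (gameRank G step (c 0) (r 0) - 1) (by omega) (fun t => c (t+1))
      (fun t => r (t+1)) (hg _ (hr 0)) (fun t => hmv (t+1)) (fun t => hr (t+1))
    refine ⟨t+1, ?_⟩
    rcases ht with ⟨h, h'⟩ | ⟨h, h'⟩
    · refine Or.inl ⟨h, fun s hs' => ?_⟩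
      cases s with
      | zero => exact hs
      | succ s => exact h' s (by omega)
    · refine Or.inr ⟨h, fun s hs' => ?_⟩
      cases s with
      | zero => exact hs
      | succ s => exact h' s (by omega)

theorem histUpTo_succ (c : ℕ → Fin n → V) (r : ℕ → V) (t : ℕ) :
    histUpTo c r (t+1) = histUpTo c r t ++ [(c t, r t)] := by
  simp [histUpTo, List.range_succ]

theorem zombiesCatchFrom_of_win {z : Fin n → V} {s : V} (h : Win G (ZStep G) z s) :
    ZombiesCatchFrom G z s := by
  obtain ⟨m, hm⟩ := h
  refine ⟨fun h => h.getLast?.elim z fun p => bestMove G (ZStep G) p.1 p.2, ?_⟩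
  intro c r hc hr hf hl
  subst hc hr
  refine win_play m c r hm (fun t => ?_) hl
  rw [hf t, histUpTo_succ]
  simp

theorem copsCatchFrom_of_win {z : Fin n → V} (h : ∀ s, Win G (CStep G) z s) :
    CopsCatchFrom G z := by
  refine ⟨fun h => h.getLast?.elim z fun p => bestMove G (CStep G) p.1 p.2, ?_⟩
  intro c r hc hf hl
  subst hc
  obtain ⟨m, hm⟩ := h (r 0)
  refine win_play m c r hm (fun t => ?_) hl
  rw [hf t, histUpTo_succ]
  simp

open Classical in
/-- The evader's answer. -/
noncomputable def evade (G : SimpleGraph V) (Safe : (Fin n → V) → V → Prop) (c : Fin n → V) (r : V) :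
    V :=
  if h : ∃ r', (r' = r ∨ G.Adj r r') ∧ Safe c r' then h.choose else r

theorem evade_legal (Safe : (Fin n → V) → V → Prop) (c : Fin n → V) (r : V) :
    evade G Safe c r = r ∨ G.Adj r (evade G Safe c r) := by
  unfold evade
  split_ifs with h
  · exact h.choose_spec.1
  · exact Or.inl rfl

theorem evade_safe {Safe : (Fin n → V) → V → Prop} {c : Fin n → V} {r : V}
    (h : ∃ r', (r' = r ∨ G.Adj r r') ∧ Safe c r') : Safe c (evade G Safe c r) := by
  unfold evade
  rw [dif_pos h]
  exact h.choose_spec.2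

/-- The play of the evader against the strategy `mv`. -/
noncomputable def playState (G : SimpleGraph V) (Safe : (Fin n → V) → V → Prop)
    (mv : GameHist V n → Fin n → V) (z : Fin n → V) (s : V) :
    ℕ → GameHist V n × (Fin n → V) × V
  | 0 => ([(z, s)], z, s)
  | t+1 =>
    ((playState G Safe mv z s t).1 ++ [(mv (playState G Safe mv z s t).1,
        evade G Safe (mv (playState G Safe mv z s t).1) (playState G Safe mv z s t).2.2)],
      mv (playState G Safe mv z s t).1,
      evade G Safe (mv (playState G Safe mv z s t).1) (playState G Safe mv z s t).2.2)

theorem lose_play (Safe : (Fin n → V) → V → Prop)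
    (hstep : ∀ c r c', Safe c r → step c r c' →
      ∃ r', (r' = r ∨ G.Adj r r') ∧ Safe c' r')
    (mv : GameHist V n → Fin n → V) (z : Fin n → V) (s : V) (hs : Safe z s) :
    ∃ (c : ℕ → Fin n → V) (r : ℕ → V), c 0 = z ∧ r 0 = s ∧ FollowsStrat mv c r ∧
      RobberLegal G r ∧
      ∀ t, (∀ u < t, step (c u) (r u) (c (u+1))) → Safe (c t) (r t) := by
  have hh : ∀ t, (playState G Safe mv z s t).1 =
      histUpTo (fun t => (playState G Safe mv z s t).2.1) (fun t => (playState G Safe mv z s t).2.2)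
        (t+1) := by
    intro t
    induction t with
    | zero => simp [histUpTo, playState]
    | succ t ih =>
      rw [histUpTo_succ, ← ih]
      simp [playState]
  refine ⟨fun t => (playState G Safe mv z s t).2.1, fun t => (playState G Safe mv z s t).2.2,
    rfl, rfl, ?_, ?_, ?_⟩
  · intro t
    rw [← hh t]
    rfl
  · intro t
    exact evade_legal _ _ _
  · intro t
    induction t with
    | zero => intro _; exact hs
    | succ t ih =>
      intro h
      have h1 := ih fun u hu => h u (by omega)
      exact evade_safe (hstep _ _ _ h1 (h t (by omega)))

theorem not_zombiesWinWith (h : ∀ z : Fin n → V, ∃ (Safe : (Fin n → V) → V → Prop) (s : V),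
      Safe z s ∧ (∀ c r, Safe c r → ∀ i, c i ≠ r) ∧
      ∀ c r c', Safe c r → ZStep G c r c' →
        (∀ i, c' i ≠ r) ∧ ∃ r', (r' = r ∨ G.Adj r r') ∧ Safe c' r') :
    ¬ ZombiesWinWith G n := by
  rintro ⟨z, hz⟩
  obtain ⟨Safe, s, hs, h1, h2⟩ := h z
  obtain ⟨mv, hmv⟩ := hz s
  obtain ⟨c, r, hc, hr, hf, hl, hsafe⟩ :=
    lose_play (step := ZStep G) Safe (fun c r c' a b => (h2 c r c' a b).2) mv z s hs
  obtain ⟨t, ⟨⟨i, hi⟩, ht⟩ | ⟨⟨i, hi⟩, ht⟩⟩ := hmv c r hc hr hf hl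
  · exact h1 _ _ (hsafe t ht) i hi
  · exact (h2 _ _ _ (hsafe t fun u hu => ht u hu.le) (ht t le_rfl)).1 i hi

theorem not_copsWinWith (h : ∀ z : Fin n → V, ∃ (Safe : (Fin n → V) → V → Prop) (s : V),
      Safe z s ∧ (∀ c r, Safe c r → ∀ i, c i ≠ r) ∧
      ∀ c r c', Safe c r → CStep G c r c' →
        (∀ i, c' i ≠ r) ∧ ∃ r', (r' = r ∨ G.Adj r r') ∧ Safe c' r') :
    ¬ CopsWinWith G n := by
  rintro ⟨z, mv, hmv⟩
  obtain ⟨Safe, s, hs, h1, h2⟩ := h z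
  obtain ⟨c, r, hc, hr, hf, hl, hsafe⟩ :=
    lose_play (step := CStep G) Safe (fun c r c' a b => (h2 c r c' a b).2) mv z s hs
  obtain ⟨t, ⟨⟨i, hi⟩, ht⟩ | ⟨⟨i, hi⟩, ht⟩⟩ := hmv c r hc hf hl
  · exact h1 _ _ (hsafe t ht) i hi
  · exact (h2 _ _ _ (hsafe t fun u hu => ht u hu.le) (ht t le_rfl)).1 i hi

/-- In a connected graph a zombie away from the survivor has a legal move. -/
theorem zmove_exists (hG : G.Connected) {x r : V} (h : x ≠ r) :
    ∃ y, G.Adj x y ∧ G.dist y r < G.dist x r := by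
  obtain ⟨p, hp⟩ := hG.exists_walk_length_eq_dist x r
  cases p with
  | nil => exact absurd rfl h
  | @cons _ v _ ha q =>
    refine ⟨v, ha, ?_⟩
    have := dist_le q
    simp at hp
    omega

theorem zstep_exists (hG : G.Connected) (c : Fin n → V) (r : V) (P : Fin n → V → Prop)
    (hc : ∀ i, c i ≠ r)
    (h : ∀ i, (∃ y, G.Adj (c i) y ∧ G.dist y r < G.dist (c i) r ∧ P i y) ∨ ∀ y, P i y) :
    ∃ c', ZStep G c r c' ∧ ∀ i, P i (c' i) := by
  have h2 : ∀ i, ∃ y, (G.Adj (c i) y ∧ G.dist y r < G.dist (c i) r) ∧ P i y := by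
    intro i
    rcases h i with ⟨y, h1, h2, h3⟩ | h'
    · exact ⟨y, ⟨h1, h2⟩, h3⟩
    · obtain ⟨y, hy⟩ := zmove_exists hG (hc i)
      exact ⟨y, hy, h' y⟩
  choose f hf using h2
  exact ⟨f, fun i => (hf i).1, fun i => (hf i).2⟩

/-- Zombie win rule: either some zombie is already on the survivor, or each zombie `i` has a legal
move with property `P i`, and all resulting positions are won. -/
theorem zwin_move [Finite V] (hG : G.Connected) (c : Fin n → V) (r : V)
    (P : Fin n → V → Prop)
    (h : (∀ i, c i ≠ r) →
      ∀ i, (∃ y, G.Adj (c i) y ∧ G.dist y r < G.dist (c i) r ∧ P i y) ∨ ∀ y, P i y)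
    (hw : (∀ i, c i ≠ r) → ∀ c' : Fin n → V, (∀ i, P i (c' i)) → (∀ i, c' i ≠ r) →
      ∀ r', (r' = r ∨ G.Adj r r') → Win G (ZStep G) c' r') :
    Win G (ZStep G) c r := by
  by_cases hc : ∃ i, c i = r
  · obtain ⟨i, hi⟩ := hc
    exact Win.caught i hi
  push Not at hc
  obtain ⟨c', hs, hP⟩ := zstep_exists hG c r P hc (h hc)
  by_cases hc2 : ∃ i, c' i = r
  · obtain ⟨i, hi⟩ := hc2
    exact Win.capture hs i hi
  push Not at hc2
  exact Win.move hs (hw hc c' hP hc2)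

/-- A zombie adjacent to the survivor captures it. -/
theorem zwin_adj (hG : G.Connected) (c : Fin n → V) (r : V) (i : Fin n)
    (h : c i = r ∨ G.Adj (c i) r) : Win G (ZStep G) c r := by
  by_cases hc : ∃ i, c i = r
  · obtain ⟨i, hi⟩ := hc
    exact Win.caught i hi
  push Not at hc
  have ha : G.Adj (c i) r := h.resolve_left (hc i)
  obtain ⟨c', hs, hP⟩ := zstep_exists hG c r (fun j y => j = i → y = r) hc (by
    intro j
    by_cases hj : j = i
    · subst hj
      refine Or.inl ⟨r, ha, ?_, fun _ => rfl⟩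
      rw [dist_self, dist_eq_one_iff_adj.mpr ha]
      omega
    · exact Or.inr fun y h => absurd h hj)
  exact Win.capture hs i (hP i rfl)

end Generic

/-! ### The Hamming graph `K_3^k` -/

section Hamming
variable {k : ℕ}

/-- Adjacency in the Hamming graph. -/
def HAdj (x y : Fin k → Fin 3) : Prop := ∃ l, x l ≠ y l ∧ ∀ m, m ≠ l → x m = y m

theorem HAdj.symm {x y : Fin k → Fin 3} (h : HAdj x y) : HAdj y x := by
  obtain ⟨l, h1, h2⟩ := h
  exact ⟨l, h1.symm, fun m hm => (h2 m hm).symm⟩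

theorem ham_local (x x' y y' : Fin k → Fin 3) (l : Fin k) (hx : ∀ m, m ≠ l → x m = x' m)
    (hy : ∀ m, m ≠ l → y m = y' m) :
    hammingDist x y + (if x' l = y' l then 0 else 1) =
      hammingDist x' y' + (if x l = y l then 0 else 1) := by
  have key : ∀ a b : Fin k → Fin 3, hammingDist a b =
      (if a l = b l then 0 else 1) + ∑ m ∈ Finset.univ.erase l, (if a m = b m then 0 else 1) := by
    intro a b
    rw [Finset.add_sum_erase _ (fun m => if a m = b m then 0 else 1) (Finset.mem_univ l)]
    unfold hammingDist
    rw [Finset.card_filter]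
    apply Finset.sum_congr rfl
    intro m _
    by_cases h : a m = b m <;> simp [h]
  rw [key x y, key x' y']
  have : ∑ m ∈ Finset.univ.erase l, (if x m = y m then 0 else 1) =
      ∑ m ∈ Finset.univ.erase l, (if x' m = y' m then 0 else 1) := by
    apply Finset.sum_congr rfl
    intro m hm
    rw [hx m (Finset.ne_of_mem_erase hm), hy m (Finset.ne_of_mem_erase hm)]
  rw [this]
  omega

theorem ham_update (x y : Fin k → Fin 3) (l : Fin k) (h : x l ≠ y l) :
    hammingDist (Function.update x l (y l)) y + 1 = hammingDist x y := by
  have := ham_local x (Function.update x l (y l)) y y l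
    (fun m hm => by rw [Function.update_of_ne hm]) (fun _ _ => rfl)
  simp [h] at this
  omega

theorem hadj_update (x : Fin k → Fin 3) (l : Fin k) (a : Fin 3) (h : x l ≠ a) :
    HAdj x (Function.update x l a) :=
  ⟨l, by simpa using h, fun m hm => by rw [Function.update_of_ne hm]⟩

theorem hadj_ham {x y : Fin k → Fin 3} (h : HAdj x y) : hammingDist x y = 1 := by
  obtain ⟨l, h1, h2⟩ := h
  have := ham_local x y y y l h2 (fun _ _ => rfl)
  simp [h1] at this
  exact this

theorem ham_adj_le {x x' : Fin k → Fin 3} (y : Fin k → Fin 3) (h : HAdj x x') :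
    hammingDist x y ≤ hammingDist x' y + 1 := by
  have h1 := hammingDist_triangle x x' y
  have h2 := hadj_ham h
  omega

theorem exists_ne_coord {x y : Fin k → Fin 3} (h : x ≠ y) : ∃ l, x l ≠ y l := by
  by_contra! h'
  exact h (funext h')

theorem ham_descent {x y : Fin k → Fin 3} (h : x ≠ y) :
    ∃ x', HAdj x x' ∧ hammingDist x' y + 1 = hammingDist x y := by
  obtain ⟨l, hl⟩ := exists_ne_coord h
  exact ⟨_, hadj_update x l (y l) hl, ham_update x y l hl⟩

/-- The potential of one pursuer. -/
def phi (i : Fin k) (x y : Fin k → Fin 3) : ℕ := hammingDist x y + if x i = y i then 1 else 0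

/-- The total potential. -/
def Psi (x : Fin k → Fin k → Fin 3) (y : Fin k → Fin 3) : ℕ := ∑ i, phi i (x i) y

theorem Psi_le (x : Fin k → Fin k → Fin 3) (y : Fin k → Fin 3) : Psi x y ≤ k * (k + 1) := by
  have : Psi x y ≤ ∑ _i : Fin k, (k + 1) := by
    apply Finset.sum_le_sum
    intro i _
    unfold phi
    have h1 : hammingDist (x i) y ≤ k := by simpa using hammingDist_le_card_fintype (x := x i) (y := y)
    split_ifs <;> omega
  simpa using this

theorem ham_round (hk : 0 < k) (x : Fin k → Fin k → Fin 3) (y : Fin k → Fin 3)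
    (hne : ∀ i, x i ≠ y) :
    ∃ l : Fin k → Fin k, (∀ i, x i (l i) ≠ y (l i)) ∧
      ((∃ i, Function.update (x i) (l i) (y (l i)) = y) ∨
        ∀ y', (y' = y ∨ HAdj y y') →
          Psi (fun i => Function.update (x i) (l i) (y (l i))) y' < Psi x y) := by
  have h1 : ∀ i, ∃ l, x i l ≠ y l ∧ (Function.update (x i) l (y l) = y ∨ l ≠ i) := by
    intro i
    by_cases h : ∃ l, x i l ≠ y l ∧ l ≠ i
    · obtain ⟨l, hl, hi⟩ := h
      exact ⟨l, hl, Or.inr hi⟩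
    · push Not at h
      obtain ⟨l, hl⟩ := exists_ne_coord (hne i)
      refine ⟨l, hl, Or.inl ?_⟩
      funext m
      by_cases hm : m = l
      · subst hm; simp
      · rw [Function.update_of_ne hm]
        by_contra hc
        have := h m hc
        have := h l hl
        simp_all
  choose l hl hl' using h1
  refine ⟨l, hl, ?_⟩
  by_cases hc : ∃ i, Function.update (x i) (l i) (y (l i)) = y
  · exact Or.inl hc
  right
  push Not at hc
  have hli : ∀ i, l i ≠ i := fun i => (hl' i).resolve_left (hc i)
  have hA : ∀ i, phi i (Function.update (x i) (l i) (y (l i))) y + 1 = phi i (x i) y := by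
    intro i
    unfold phi
    rw [Function.update_of_ne (hli i).symm, ← ham_update (x i) y (l i) (hl i)]
    omega
  intro y' hy'
  rcases hy' with rfl | ⟨m, hm1, hm2⟩
  · unfold Psi
    apply Finset.sum_lt_sum_of_nonempty ⟨⟨0, hk⟩, Finset.mem_univ _⟩
    intro i _
    beta_reduce
    have := hA i
    omega
  · unfold Psi
    apply Finset.sum_lt_sum
    · intro i _
      beta_reduce
      have h1 := hA i
      have h2 := ham_local (Function.update (x i) (l i) (y (l i)))
        (Function.update (x i) (l i) (y (l i))) y y' m (fun _ _ => rfl) hm2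
      unfold phi at h1 ⊢
      by_cases him : i = m
      · subst him
        revert h1 h2
        generalize Function.update (x i) (l i) (y (l i)) = u
        intro h1 h2
        by_cases ha : u i = y i <;> by_cases hb : u i = y' i <;> simp_all <;> omega
      · rw [← hm2 i him]
        split_ifs at h1 h2 ⊢ <;> omega
    · refine ⟨m, Finset.mem_univ _, ?_⟩
      beta_reduce
      have h1 := hA m
      have h2 := ham_local (Function.update (x m) (l m) (y (l m)))
        (Function.update (x m) (l m) (y (l m))) y y' m (fun _ _ => rfl) hm2
      unfold phi at h1 ⊢
      revert h1 h2
      generalize Function.update (x m) (l m) (y (l m)) = u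
      intro h1 h2
      by_cases ha : u m = y m <;> by_cases hb : u m = y' m <;> simp_all <;> omega

end Hamming

/-! ### The graph: a Hamming core, a spine and gadgets -/

/-- Vertices: the core, the spine, and the inner and outer vertices of the gadgets. -/
inductive PV (k R M : ℕ) : Type
  | core : (Fin k → Fin 3) → PV k R M
  | sp : Fin R → PV k R M
  | inn : Fin M → Fin 5 → PV k R M
  | out : Fin M → Fin 5 → PV k R M

namespace PV
set_option linter.unusedSimpArgs false
variable {k R M : ℕ}

instance : Finite (PV k R M) := by
  let f : PV k R M → (Fin k → Fin 3) ⊕ Fin R ⊕ (Fin M × Fin 5) ⊕ (Fin M × Fin 5) := fun v =>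
    match v with
    | core x => Sum.inl x
    | sp i => Sum.inr (Sum.inl i)
    | inn j t => Sum.inr (Sum.inr (Sum.inl (j, t)))
    | out j t => Sum.inr (Sum.inr (Sum.inr (j, t)))
  apply Finite.of_injective f
  intro a b h
  cases a <;> cases b <;> simp_all [f]

/-- Adjacency. -/
def adj (hub : Fin M → Fin R) : PV k R M → PV k R M → Prop
  | core x, core y => HAdj x y
  | core x, sp i => x = 0 ∧ i.val = 0
  | sp i, core x => x = 0 ∧ i.val = 0
  | sp i, sp j => i.val + 1 = j.val ∨ j.val + 1 = i.val
  | sp i, inn j _ => hub j = i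
  | inn j _, sp i => hub j = i
  | inn j t, out j' t' => j = j' ∧ t = t'
  | out j t, inn j' t' => j = j' ∧ t = t'
  | out j t, out j' t' => j = j' ∧ (t' = t + 1 ∨ t = t' + 1)
  | _, _ => False

/-- The graph. -/
def graph (k : ℕ) {R M : ℕ} (hub : Fin M → Fin R) : SimpleGraph (PV k R M) where
  Adj := adj hub
  symm := ⟨by
    intro a b h
    cases a <;> cases b <;> simp only [adj] at h ⊢ <;> first
      | exact h.symm
      | exact h
      | exact ⟨h.1.symm, h.2.symm⟩⟩
  loopless := ⟨by
    intro a h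
    cases a with
    | core x => obtain ⟨l, h1, _⟩ := h; exact h1 rfl
    | sp i => simp [adj] at h
    | inn j t => exact h
    | out j t => simp [adj] at h⟩

/-- Shadow in the core. -/
def sh : PV k R M → Fin k → Fin 3
  | core x => x
  | _ => 0

/-- Base height. -/
def bht (hub : Fin M → Fin R) : PV k R M → ℕ
  | core _ => 0
  | sp i => i.val + 1
  | inn j _ => (hub j).val + 1
  | out j _ => (hub j).val + 1

/-- Depth inside a gadget. -/
def ex : PV k R M → ℕ
  | core _ => 0
  | sp _ => 0
  | inn _ _ => 1
  | out _ _ => 2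

variable {hub : Fin M → Fin R}

@[simp] theorem sh_core (x : Fin k → Fin 3) : sh (core x : PV k R M) = x := rfl
@[simp] theorem sh_sp (i : Fin R) : sh (sp i : PV k R M) = 0 := rfl
@[simp] theorem sh_inn (j : Fin M) (t : Fin 5) : sh (inn j t : PV k R M) = 0 := rfl
@[simp] theorem sh_out (j : Fin M) (t : Fin 5) : sh (out j t : PV k R M) = 0 := rfl
@[simp] theorem ex_core (x : Fin k → Fin 3) : ex (core x : PV k R M) = 0 := rfl
@[simp] theorem ex_sp (i : Fin R) : ex (sp i : PV k R M) = 0 := rfl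
@[simp] theorem ex_inn (j : Fin M) (t : Fin 5) : ex (inn j t : PV k R M) = 1 := rfl
@[simp] theorem ex_out (j : Fin M) (t : Fin 5) : ex (out j t : PV k R M) = 2 := rfl
@[simp] theorem bht_core (x : Fin k → Fin 3) : bht hub (core x : PV k R M) = 0 := rfl
@[simp] theorem bht_sp (i : Fin R) : bht hub (sp i : PV k R M) = i.val + 1 := rfl
@[simp] theorem bht_inn (j : Fin M) (t : Fin 5) : bht hub (inn j t : PV k R M) = (hub j).val + 1 := rfl
@[simp] theorem bht_out (j : Fin M) (t : Fin 5) : bht hub (out j t : PV k R M) = (hub j).val + 1 := rfl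

theorem main_ext {v w : PV k R M} (hv : ex v = 0) (hw : ex w = 0) (hb : bht hub v = bht hub w)
    (hs : sh v = sh w) : v = w := by
  cases v <;> cases w <;> simp_all
  exact Fin.ext hb

theorem sh_of_bht {v : PV k R M} (h : 0 < bht hub v) : sh v = 0 := by
  cases v <;> simp_all

theorem main_ext' {v w : PV k R M} (hv : ex v = 0) (hw : ex w = 0) (hb : bht hub v = bht hub w)
    (hp : 0 < bht hub v) : v = w :=
  main_ext hv hw hb (by rw [sh_of_bht hp, sh_of_bht (hb ▸ hp)])

/-- Distance to a vertex outside the gadgets. -/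
def mdist (hub : Fin M → Fin R) (v r : PV k R M) : ℕ :=
  ex v + (bht hub v - bht hub r) + (bht hub r - bht hub v) + hammingDist (sh v) (sh r)

theorem mdist_edge {v w : PV k R M} (r : PV k R M) (h : (graph k hub).Adj v w) :
    mdist hub v r ≤ mdist hub w r + 1 := by
  unfold mdist
  change adj hub v w at h
  cases v <;> cases w <;> simp only [adj] at h
  case core.core => have := ham_adj_le (sh r) h; simp only [ex_core, ex_sp, ex_inn, ex_out, bht_core, bht_sp, bht_inn, bht_out, sh_core, sh_sp, sh_inn, sh_out]; omega
  case core.sp => obtain ⟨rfl, h⟩ := h; simp only [ex_core, ex_sp, ex_inn, ex_out, bht_core, bht_sp, bht_inn, bht_out, sh_core, sh_sp, sh_inn, sh_out]; omega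
  case sp.core => obtain ⟨rfl, h⟩ := h; simp only [ex_core, ex_sp, ex_inn, ex_out, bht_core, bht_sp, bht_inn, bht_out, sh_core, sh_sp, sh_inn, sh_out]; omega
  case sp.sp => simp only [ex_core, ex_sp, ex_inn, ex_out, bht_core, bht_sp, bht_inn, bht_out, sh_core, sh_sp, sh_inn, sh_out]; omega
  case sp.inn => subst h; simp only [ex_core, ex_sp, ex_inn, ex_out, bht_core, bht_sp, bht_inn, bht_out, sh_core, sh_sp, sh_inn, sh_out]; omega
  case inn.sp => subst h; simp only [ex_core, ex_sp, ex_inn, ex_out, bht_core, bht_sp, bht_inn, bht_out, sh_core, sh_sp, sh_inn, sh_out]; omega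
  case inn.out => obtain ⟨rfl, h⟩ := h; simp only [ex_core, ex_sp, ex_inn, ex_out, bht_core, bht_sp, bht_inn, bht_out, sh_core, sh_sp, sh_inn, sh_out]; omega
  case out.inn => obtain ⟨rfl, h⟩ := h; simp only [ex_core, ex_sp, ex_inn, ex_out, bht_core, bht_sp, bht_inn, bht_out, sh_core, sh_sp, sh_inn, sh_out]; omega
  case out.out => obtain ⟨rfl, h⟩ := h; simp only [ex_core, ex_sp, ex_inn, ex_out, bht_core, bht_sp, bht_inn, bht_out, sh_core, sh_sp, sh_inn, sh_out]; omega

/-- Moving down (or out of a gadget) from above. -/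
theorem step_down {v r : PV k R M} (hr : bht hub r ≤ bht hub v)
    (h : 0 < ex v ∨ bht hub r < bht hub v) :
    ∃ w, (graph k hub).Adj v w ∧ mdist hub w r < mdist hub v r ∧ sh w = 0 ∧
      bht hub w + ex w + 1 = bht hub v + ex v ∧ (0 < ex v → bht hub w = bht hub v) ∧
      (ex v = 0 → ex w = 0) := by
  cases v with
  | core x => simp at h
  | sp i =>
    by_cases hi : i.val = 0
    · refine ⟨core 0, ⟨rfl, hi⟩, ?_, rfl, ?_, ?_, ?_⟩ <;> simp [mdist] at * <;> omega
    · refine ⟨sp ⟨i.val - 1, by omega⟩, Or.inr (by simp; omega), ?_, rfl, ?_, ?_, ?_⟩ <;>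
        simp [mdist] at * <;> omega
  | inn j t =>
    refine ⟨sp (hub j), rfl, ?_, rfl, ?_, ?_, ?_⟩ <;> simp [mdist] at *
  | out j t =>
    refine ⟨inn j t, ⟨rfl, rfl⟩, ?_, rfl, ?_, ?_, ?_⟩ <;> simp [mdist] at *

/-- Leaving a gadget. -/
theorem step_leave {v r : PV k R M} (h : 0 < ex v) :
    ∃ w, (graph k hub).Adj v w ∧ mdist hub w r < mdist hub v r := by
  cases v with
  | core x => simp at h
  | sp i => simp at h
  | inn j t =>
    refine ⟨sp (hub j), rfl, ?_⟩; simp [mdist] at *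
  | out j t =>
    refine ⟨inn j t, ⟨rfl, rfl⟩, ?_⟩; simp [mdist] at *

/-- Moving up the spine. -/
theorem step_up {v r : PV k R M} (hv : ex v = 0) (hs : sh v = 0) (hr : ex r = 0)
    (h : bht hub v < bht hub r) :
    ∃ w, (graph k hub).Adj v w ∧ mdist hub w r < mdist hub v r ∧ sh w = 0 ∧
      bht hub w = bht hub v + 1 ∧ ex w = 0 := by
  have hR : bht hub r ≤ R := by
    cases r <;> simp at * <;> omega
  cases v with
  | core x =>
    simp only [sh_core, sh_sp, sh_inn, sh_out] at hs
    subst hs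
    refine ⟨sp ⟨0, by omega⟩, ⟨rfl, rfl⟩, ?_, rfl, ?_, ?_⟩ <;>
      simp [mdist] at * <;> omega
  | sp i =>
    rw [bht_sp] at h
    have hi : i.val + 1 < R := by omega
    refine ⟨sp ⟨i.val + 1, hi⟩, Or.inl rfl, ?_, rfl, ?_, ?_⟩ <;>
      simp [mdist] at * <;> omega
  | inn j t => simp at hv
  | out j t => simp at hv

/-- Moving in the core. -/
theorem step_core {v r : PV k R M} (hv : ex v = 0) (hb : bht hub v = 0) (l : Fin k)
    (hl : sh v l ≠ sh r l) :
    ∃ w, (graph k hub).Adj v w ∧ mdist hub w r < mdist hub v r ∧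
      sh w = Function.update (sh v) l (sh r l) ∧ bht hub w = 0 ∧ ex w = 0 := by
  cases v with
  | core x =>
    refine ⟨core (Function.update x l (sh r l)), hadj_update x l _ hl, ?_, rfl, rfl, rfl⟩
    have := ham_update x (sh r) l hl
    simp only [mdist, bht_core, bht_sp, bht_inn, bht_out, ex_core, ex_sp, ex_inn, ex_out, sh_core, sh_sp, sh_inn, sh_out]
    omega
  | sp i => simp at hb
  | inn j t => simp at hv
  | out j t => simp at hv

theorem mdist_descent {v r : PV k R M} (hr : ex r = 0) (h : v ≠ r) :
    ∃ w, (graph k hub).Adj v w ∧ mdist hub w r < mdist hub v r := by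
  by_cases he : 0 < ex v
  · exact step_leave he
  have he : ex v = 0 := by omega
  rcases lt_trichotomy (bht hub v) (bht hub r) with hb | hb | hb
  · by_cases hs : sh v = 0
    · obtain ⟨w, h1, h2, _⟩ := step_up he hs hr hb
      exact ⟨w, h1, h2⟩
    · have hb0 : bht hub v = 0 := by
        by_contra hc
        exact hs (sh_of_bht (by omega : 0 < bht hub v))
      obtain ⟨l, hl⟩ := exists_ne_coord (x := sh v) (y := sh r)
        (by rw [sh_of_bht (hub := hub) (v := r) (by omega)]; exact hs)
      obtain ⟨w, h1, h2, _⟩ := step_core he hb0 l hl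
      exact ⟨w, h1, h2⟩
  · by_cases hs : sh v = sh r
    · exact absurd (main_ext he hr hb hs) h
    · have hb0 : bht hub v = 0 := by
        by_contra hc
        refine hs ?_
        rw [sh_of_bht (hub := hub) (v := r) (by omega), sh_of_bht (hub := hub) (v := v) (by omega)]
      obtain ⟨l, hl⟩ := exists_ne_coord hs
      obtain ⟨w, h1, h2, _⟩ := step_core he hb0 l hl
      exact ⟨w, h1, h2⟩
  · obtain ⟨w, h1, h2, _⟩ := step_down hb.le (Or.inr hb)
    exact ⟨w, h1, h2⟩

theorem mdist_walk {r : PV k R M} (hr : ex r = 0) (m : ℕ) :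
    ∀ v : PV k R M, mdist hub v r ≤ m → ∃ p : (graph k hub).Walk v r, p.length ≤ mdist hub v r := by
  induction m with
  | zero =>
    intro v hv
    by_cases h : v = r
    · subst h; exact ⟨Walk.nil, by simp⟩
    · obtain ⟨w, _, h2⟩ := mdist_descent (hub := hub) hr h
      omega
  | succ m ih =>
    intro v hv
    by_cases h : v = r
    · subst h; exact ⟨Walk.nil, by simp⟩
    · obtain ⟨w, h1, h2⟩ := mdist_descent (hub := hub) hr h
      obtain ⟨p, hp⟩ := ih w (by omega)
      exact ⟨Walk.cons h1 p, by simp; omega⟩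

theorem connected : (graph k hub).Connected := by
  have hc : ∀ v : PV k R M, (graph k hub).Reachable v (core 0) := by
    intro v
    obtain ⟨p, _⟩ := mdist_walk (hub := hub) (r := core 0) rfl _ v le_rfl
    exact ⟨p⟩
  have : Nonempty (PV k R M) := ⟨core 0⟩
  exact Connected.mk fun v w => (hc v).trans (hc w).symm

theorem mdist_le_walk {r : PV k R M} {v w : PV k R M} (p : (graph k hub).Walk v w) :
    mdist hub v r ≤ p.length + mdist hub w r := by
  induction p with
  | nil => simp
  | cons h p ih =>
    have := mdist_edge r h
    simp
    omega

theorem dist_eq {v r : PV k R M} (hr : ex r = 0) : (graph k hub).dist v r = mdist hub v r := by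
  apply le_antisymm
  · obtain ⟨p, hp⟩ := mdist_walk (hub := hub) hr _ v le_rfl
    exact (dist_le p).trans hp
  · obtain ⟨p, hp⟩ := connected.exists_walk_length_eq_dist (G := graph k hub) v r
    have := mdist_le_walk (r := r) p
    have h0 : mdist hub r r = 0 := by simp [mdist, hr]
    omega

/-- Survivor moves away from the hubs. -/
theorem surv_move {r r' : PV k R M} (hr : ex r = 0) (hh : ∀ j, bht hub r ≠ (hub j).val + 1)
    (h : r' = r ∨ (graph k hub).Adj r r') :
    ex r' = 0 ∧ (sh r' = sh r ∨ HAdj (sh r) (sh r')) ∧ bht hub r' ≤ bht hub r + 1 ∧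
      bht hub r ≤ bht hub r' + 1 := by
  rcases h with rfl | h
  · exact ⟨hr, Or.inl rfl, by omega, by omega⟩
  change adj hub r r' at h
  cases r <;> cases r' <;> simp only [adj] at h <;> simp only [ex_core, ex_sp, ex_inn, ex_out, bht_core, bht_sp, bht_inn, bht_out, sh_core, sh_sp, sh_inn, sh_out] at *
  case core.core => refine ⟨trivial, Or.inr h, by omega, by omega⟩
  case core.sp => refine ⟨trivial, Or.inl h.1.symm, by omega, by omega⟩
  case sp.core => refine ⟨trivial, Or.inl h.1, by omega, by omega⟩
  case sp.sp => refine ⟨trivial, Or.inl trivial, by omega, by omega⟩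
  case sp.inn j _ => subst h; exact absurd rfl (hh j)
  all_goals omega

end PV

namespace PV
variable {k R M : ℕ} {hub : Fin M → Fin R} {n : ℕ}

/-- The zombies win. -/
def ZWin (hub : Fin M → Fin R) (c : Fin n → PV k R M) (r : PV k R M) : Prop :=
  Win (graph k hub) (ZStep (graph k hub)) c r

theorem zwin_main (c : Fin n → PV k R M) (r : PV k R M) (hr : ex r = 0)
    (P : Fin n → PV k R M → Prop)
    (h : (∀ i, c i ≠ r) →
      ∀ i, (∃ y, (graph k hub).Adj (c i) y ∧ mdist hub y r < mdist hub (c i) r ∧ P i y) ∨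
        ∀ y, P i y)
    (hw : (∀ i, c i ≠ r) → ∀ c' : Fin n → PV k R M, (∀ i, P i (c' i)) → (∀ i, c' i ≠ r) →
      ∀ r', (r' = r ∨ (graph k hub).Adj r r') → ZWin hub c' r') :
    ZWin hub c r := by
  refine zwin_move connected c r P (fun hc i => ?_) hw
  rcases h hc i with ⟨y, h1, h2, h3⟩ | h'
  · exact Or.inl ⟨y, h1, by rw [dist_eq hr, dist_eq hr]; exact h2, h3⟩
  · exact Or.inr h'

theorem sandwich (a b : Fin n) (m : ℕ) : ∀ (c : Fin n → PV k R M) (r : PV k R M) (h f : ℕ),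
    f - h ≤ m → ex r = 0 → ex (c a) = 0 → ex (c b) = 0 → sh (c a) = 0 → bht hub (c a) = h →
    bht hub (c b) = f → h < bht hub r → bht hub r < f →
    (∀ j, ¬ (h < (hub j).val + 1 ∧ (hub j).val + 1 < f)) → ZWin hub c r := by
  induction m with
  | zero => intro c r h f h1; intros; omega
  | succ m ih =>
    intro c r h f hm hr ha hb hsa hha hhb h1 h2 hh
    have hab : a ≠ b := by
      rintro rfl
      omega
    refine zwin_main c r hr (fun i y =>
      (i = a → ex y = 0 ∧ sh y = 0 ∧ bht hub y = h + 1) ∧ (i = b → ex y = 0 ∧ bht hub y + 1 = f)) ?_ ?_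
    · intro hc i
      by_cases hia : i = a
      · subst hia
        obtain ⟨y, y1, y2, y3, y4, y5⟩ := step_up (hub := hub) (v := c i) ha hsa hr (by omega)
        exact Or.inl ⟨y, y1, y2, fun _ => ⟨y5, y3, by omega⟩, fun h => absurd h hab⟩
      by_cases hib : i = b
      · subst hib
        obtain ⟨y, y1, y2, y3, y4, y5, y6⟩ := step_down (hub := hub) (v := c i) (r := r) (by omega)
          (Or.inr (by omega))
        have := y6 hb
        exact Or.inl ⟨y, y1, y2, fun h => absurd h hia, fun _ => ⟨this, by omega⟩⟩
      · exact Or.inr fun y => ⟨fun h => absurd h hia, fun h => absurd h hib⟩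
    · intro hc c' hP hc' r' hr'
      obtain ⟨a1, a2, a3⟩ := (hP a).1 rfl
      obtain ⟨b1, b2⟩ := (hP b).2 rfl
      have n1 : bht hub r ≠ h + 1 := fun he =>
        hc' a (main_ext' (hub := hub) a1 hr (by omega) (by omega))
      have n2 : bht hub r + 1 ≠ f := fun he =>
        hc' b (main_ext' (hub := hub) b1 hr (by omega) (by omega))
      obtain ⟨s1, s2, s3, s4⟩ := surv_move (hub := hub) hr
        (fun j hj => hh j (by omega)) hr'
      by_cases e1 : bht hub r' = h + 1
      · exact Win.caught a (main_ext' (hub := hub) a1 s1 (by omega) (by omega))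
      by_cases e2 : bht hub r' + 1 = f
      · exact Win.caught b (main_ext' (hub := hub) b1 s1 (by omega) (by omega))
      exact ih c' r' (h+1) (f-1) (by omega) s1 a1 b1 a2 a3 (by omega) (by omega) (by omega)
        (fun j hj => hh j (by omega))

/-- A zombie at height `h ≤ bht r` over the trivial shadow, and `b` above. -/
theorem sandwich' (a b : Fin n) (c : Fin n → PV k R M) (r : PV k R M)
    (hr : ex r = 0) (ha : ex (c a) = 0) (hb : ex (c b) = 0) (hsa : sh (c a) = 0) (hsr : sh r = 0)
    (h1 : bht hub (c a) ≤ bht hub r) (h2 : bht hub r ≤ bht hub (c b))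
    (hh : ∀ j, ¬ (bht hub (c a) < (hub j).val + 1 ∧ (hub j).val + 1 < bht hub (c b))) :
    ZWin hub c r := by
  by_cases e1 : bht hub (c a) = bht hub r
  · exact Win.caught a (main_ext ha hr e1 (by rw [hsa, hsr]))
  by_cases e2 : bht hub r = bht hub (c b)
  · exact Win.caught b (main_ext' (hub := hub) hb hr e2.symm (by omega))
  exact sandwich a b _ c r _ _ le_rfl hr ha hb hsa rfl rfl (by omega) (by omega) hh

/-- End phase: all near zombies `nu i` are in the core. -/
theorem betaPhase (hk : 0 < k) (nu : Fin k → Fin n) (hnu : Function.Injective nu) (b : Fin n)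
    (X : ℕ) (hX : ∀ j, X ≤ (hub j).val + 1) (m : ℕ) :
    ∀ (c : Fin n → PV k R M) (r : PV k R M),
    (∀ i, ex (c (nu i)) = 0 ∧ bht hub (c (nu i)) = 0) →
    Psi (fun i => sh (c (nu i))) (sh r) ≤ m → m < bht hub (c b) → bht hub (c b) ≤ X →
    ex (c b) = 0 → ex r = 0 → bht hub r < bht hub (c b) → ZWin hub c r := by
  induction m with
  | zero =>
    intro c r hnear hPsi hf hfX hb hr hrf
    by_cases hex : ∃ i, sh (c (nu i)) = sh r
    · obtain ⟨i, hi⟩ := hex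
      by_cases hp : bht hub r = 0
      · exact Win.caught (nu i) (main_ext (hub := hub) (hnear i).1 hr
          (by rw [(hnear i).2, hp]) hi)
      · have hs := sh_of_bht (hub := hub) (v := r) (by omega)
        exact sandwich' (nu i) b c r hr (hnear i).1 hb (by rw [hi, hs]) hs
          (by rw [(hnear i).2]; omega) (by omega) (fun j hj => by have := hX j; omega)
    · push Not at hex
      exfalso
      obtain ⟨l, h1, h2⟩ := ham_round hk (fun i => sh (c (nu i))) (sh r) hex
      have : phi ⟨0, hk⟩ (sh (c (nu ⟨0, hk⟩))) (sh r) ≤ 0 :=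
        (Finset.single_le_sum (f := fun i => phi i (sh (c (nu i))) (sh r))
          (fun _ _ => Nat.zero_le _) (Finset.mem_univ (⟨0, hk⟩ : Fin k))).trans hPsi
      unfold phi at this
      have h0 : hammingDist (sh (c (nu ⟨0, hk⟩))) (sh r) = 0 := by omega
      exact hex _ (hammingDist_eq_zero.mp h0)
  | succ m ih =>
    intro c r hnear hPsi hf hfX hb hr hrf
    by_cases hex : ∃ i, sh (c (nu i)) = sh r
    · obtain ⟨i, hi⟩ := hex
      by_cases hp : bht hub r = 0
      · exact Win.caught (nu i) (main_ext (hub := hub) (hnear i).1 hr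
          (by rw [(hnear i).2, hp]) hi)
      · have hs := sh_of_bht (hub := hub) (v := r) (by omega)
        exact sandwich' (nu i) b c r hr (hnear i).1 hb (by rw [hi, hs]) hs
          (by rw [(hnear i).2]; omega) (by omega) (fun j hj => by have := hX j; omega)
    push Not at hex
    obtain ⟨l, hl, hround⟩ := ham_round hk (fun i => sh (c (nu i))) (sh r) hex
    have hnb : ∀ i, nu i ≠ b := by
      intro i hi
      have := (hnear i).2
      rw [hi] at this
      omega
    refine zwin_main c r hr (fun z y =>
      (∀ i, z = nu i → ex y = 0 ∧ bht hub y = 0 ∧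
        sh y = Function.update (sh (c (nu i))) (l i) (sh r (l i))) ∧
      (z = b → ex y = 0 ∧ bht hub y + 1 = bht hub (c b))) ?_ ?_
    · intro hc z
      by_cases hz : ∃ i, z = nu i
      · obtain ⟨i, rfl⟩ := hz
        obtain ⟨y, y1, y2, y3, y4, y5⟩ := step_core (hub := hub) (hnear i).1 (hnear i).2 (l i) (hl i)
        refine Or.inl ⟨y, y1, y2, fun i' hi' => ?_, fun h => absurd h (hnb i)⟩
        obtain rfl := hnu hi'
        exact ⟨y5, y4, y3⟩
      · push Not at hz
        by_cases hzb : z = b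
        · subst hzb
          obtain ⟨y, y1, y2, y3, y4, y5, y6⟩ := step_down (hub := hub) (v := c z) (r := r)
            (by omega) (Or.inr (by omega))
          have := y6 hb
          exact Or.inl ⟨y, y1, y2, fun i h => absurd h (hz i), fun _ => ⟨this, by omega⟩⟩
        · exact Or.inr fun y => ⟨fun i h => absurd h (hz i), fun h => absurd h hzb⟩
    · intro hc c' hP hc' r' hr'
      obtain ⟨b1, b2⟩ := (hP b).2 rfl
      have hnear' := fun i => (hP (nu i)).1 i rfl
      have n2 : bht hub r + 1 ≠ bht hub (c b) := fun he =>
        hc' b (main_ext' (hub := hub) b1 hr (by omega) (by omega))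
      obtain ⟨s1, s2, s3, s4⟩ := surv_move (hub := hub) hr
        (fun j hj => by have := hX j; omega) hr'
      by_cases e2 : bht hub r' + 1 = bht hub (c b)
      · exact Win.caught b (main_ext' (hub := hub) b1 s1 (by omega) (by omega))
      have hshc : (fun i => sh (c' (nu i))) =
          fun i => Function.update (sh (c (nu i))) (l i) (sh r (l i)) := by
        funext i
        exact (hnear' i).2.2
      rcases hround with ⟨i, hi⟩ | hround
      · have hi' : sh (c' (nu i)) = sh r := by rw [(hnear' i).2.2]; exact hi
        by_cases hp : bht hub r = 0
        · exact absurd (main_ext (hub := hub) (hnear' i).1 hr (by rw [(hnear' i).2.1, hp]) hi')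
            (hc' (nu i))
        · have hs := sh_of_bht (hub := hub) (v := r) (by omega)
          rw [hs] at hi' s2
          have hsr' : sh r' = 0 := by
            rcases s2 with s2 | s2
            · exact s2
            · by_cases hp' : bht hub r' = 0
              · rcases hr' with rfl | hr'
                · exact hs
                · change adj hub r r' at hr'
                  cases r <;> cases r' <;> simp_all [adj]
              · exact sh_of_bht (hub := hub) (by omega)
          exact sandwich' (nu i) b c' r' s1 (hnear' i).1 b1 hi' hsr'
            (by rw [(hnear' i).2.1]; omega) (by omega) (fun j hj => by have := hX j; omega)
      · have hlt := hround (sh r') s2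
        refine ih c' r' (fun i => ⟨(hnear' i).1, (hnear' i).2.1⟩) ?_ (by omega) (by omega) b1 s1
          (by omega)
        rw [hshc]
        omega

/-- Middle phase: the near zombies are in the core or low on the spine. -/
theorem alphaTwo (hk : 0 < k) (nu : Fin k → Fin n) (hnu : Function.Injective nu) (b : Fin n)
    (X : ℕ) (hX : ∀ j, X ≤ (hub j).val + 1) (H : ℕ) :
    ∀ (c : Fin n → PV k R M) (r : PV k R M),
    (∀ i, ex (c (nu i)) = 0 ∧ bht hub (c (nu i)) ≤ H) →
    H + k * (k + 1) < bht hub (c b) → bht hub (c b) ≤ X →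
    ex (c b) = 0 → ex r = 0 → bht hub r < bht hub (c b) → ZWin hub c r := by
  induction H with
  | zero =>
    intro c r hnear hf hfX hb hr hrf
    exact betaPhase hk nu hnu b X hX (k * (k+1)) c r
      (fun i => ⟨(hnear i).1, by have := (hnear i).2; omega⟩) (Psi_le _ _) (by omega) hfX hb hr hrf
  | succ H ih =>
    intro c r hnear hf hfX hb hr hrf
    by_cases hex : ∃ i, sh (c (nu i)) = sh r ∧ bht hub (c (nu i)) ≤ bht hub r
    · obtain ⟨i, hi, hle⟩ := hex
      by_cases hp : bht hub r = 0
      · exact Win.caught (nu i) (main_ext (hub := hub) (hnear i).1 hr (by omega) hi)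
      · have hs := sh_of_bht (hub := hub) (v := r) (by omega)
        exact sandwich' (nu i) b c r hr (hnear i).1 hb (by rw [hi, hs]) hs
          hle (by omega) (fun j hj => by have := hX j; omega)
    push Not at hex
    have hnb : ∀ i, nu i ≠ b := by
      intro i hi
      have := (hnear i).2
      rw [hi] at this
      omega
    refine zwin_main c r hr (fun z y =>
      (∀ i, z = nu i → ex y = 0 ∧ bht hub y ≤ H) ∧
      (z = b → ex y = 0 ∧ bht hub y + 1 = bht hub (c b))) ?_ ?_
    · intro hc z
      by_cases hz : ∃ i, z = nu i
      · obtain ⟨i, rfl⟩ := hz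
        by_cases hlt : bht hub r < bht hub (c (nu i))
        · obtain ⟨y, y1, y2, y3, y4, y5, y6⟩ := step_down (hub := hub) (v := c (nu i)) (r := r)
            (by omega) (Or.inr (by omega))
          have := y6 (hnear i).1
          have := (hnear i).2
          have := (hnear i).1
          exact Or.inl ⟨y, y1, y2, fun i' hi' => ⟨by omega, by omega⟩, fun h => absurd h (hnb i)⟩
        · have hne : sh (c (nu i)) ≠ sh r := fun he => by
            have := hex i he
            omega
          have hb0 : bht hub (c (nu i)) = 0 := by
            by_contra hpos
            apply hne
            rw [sh_of_bht (hub := hub) (v := r) (by omega),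
              sh_of_bht (hub := hub) (v := c (nu i)) (by omega)]
          obtain ⟨l, hl⟩ := exists_ne_coord hne
          obtain ⟨y, y1, y2, y3, y4, y5⟩ := step_core (hub := hub) (hnear i).1 hb0 l hl
          exact Or.inl ⟨y, y1, y2, fun i' hi' => ⟨y5, by omega⟩, fun h => absurd h (hnb i)⟩
      · push Not at hz
        by_cases hzb : z = b
        · subst hzb
          obtain ⟨y, y1, y2, y3, y4, y5, y6⟩ := step_down (hub := hub) (v := c z) (r := r)
            (by omega) (Or.inr (by omega))
          have := y6 hb
          exact Or.inl ⟨y, y1, y2, fun i h => absurd h (hz i), fun _ => ⟨this, by omega⟩⟩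
        · exact Or.inr fun y => ⟨fun i h => absurd h (hz i), fun h => absurd h hzb⟩
    · intro hc c' hP hc' r' hr'
      obtain ⟨b1, b2⟩ := (hP b).2 rfl
      have hnear' := fun i => (hP (nu i)).1 i rfl
      have n2 : bht hub r + 1 ≠ bht hub (c b) := fun he =>
        hc' b (main_ext' (hub := hub) b1 hr (by omega) (by omega))
      obtain ⟨s1, s2, s3, s4⟩ := surv_move (hub := hub) hr
        (fun j hj => by have := hX j; omega) hr'
      by_cases e2 : bht hub r' + 1 = bht hub (c b)
      · exact Win.caught b (main_ext' (hub := hub) b1 s1 (by omega) (by omega))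
      exact ih c' r' hnear' (by omega) (by omega) b1 s1 (by omega)

/-- Opening phase: the near zombies come down together. -/
theorem alphaOne (hk : 0 < k) (nu : Fin k → Fin n) (hnu : Function.Injective nu) (b : Fin n)
    (g : Fin k) (X : ℕ) (hX : ∀ j, X ≤ (hub j).val + 1) (hXN : X = k * (k + 1) + 4) (H : ℕ) :
    ∀ (c : Fin n → PV k R M) (r : PV k R M), H ≤ X →
    (∀ i, (bht hub (c (nu i)) + ex (c (nu i)) = H + 1 ∨
        bht hub (c (nu i)) + ex (c (nu i)) = H + 2) ∧
      (0 < ex (c (nu i)) → bht hub (c (nu i)) = X)) →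
    bht hub (c (nu g)) + ex (c (nu g)) = H + 1 →
    bht hub (c b) + ex (c b) = H + X → (0 < ex (c b) → bht hub (c b) + 1 = 2 * X) →
    ex r = 0 → bht hub r < H + 1 → bht hub r < X → ZWin hub c r := by
  induction H with
  | zero =>
    intro c r hH hnear hg hb1 hb2 hr hp hpX
    have hb : ex (c b) = 0 := by omega
    refine alphaTwo hk nu hnu b X hX 2 c r (fun i => ?_) (by omega) (by omega) hb hr (by omega)
    obtain ⟨h1, h2⟩ := hnear i
    exact ⟨by omega, by omega⟩
  | succ H ih =>
    intro c r hH hnear hg hb1 hb2 hr hp hpX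
    have hnb : ∀ i, nu i ≠ b := by
      intro i hi
      have := (hnear i).1
      rw [hi] at this
      omega
    refine zwin_main c r hr (fun z y =>
      (∀ i, z = nu i → bht hub y + ex y + 1 = bht hub (c (nu i)) + ex (c (nu i)) ∧
        (0 < ex y → bht hub y = X)) ∧
      (z = b → bht hub y + ex y = H + X ∧ (0 < ex y → bht hub y + 1 = 2 * X))) ?_ ?_
    · intro hc z
      by_cases hz : ∃ i, z = nu i
      · obtain ⟨i, rfl⟩ := hz
        obtain ⟨h1, h2⟩ := hnear i
        obtain ⟨y, y1, y2, y3, y4, y5, y6⟩ := step_down (hub := hub) (v := c (nu i)) (r := r)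
            (by omega) (by omega)
        refine Or.inl ⟨y, y1, y2, fun i' hi' => ?_, fun h => absurd h (hnb i)⟩
        obtain rfl := hnu hi'
        exact ⟨by omega, by omega⟩
      · push Not at hz
        by_cases hzb : z = b
        · subst hzb
          obtain ⟨y, y1, y2, y3, y4, y5, y6⟩ := step_down (hub := hub) (v := c z) (r := r)
            (by omega) (by omega)
          exact Or.inl ⟨y, y1, y2, fun i h => absurd h (hz i), fun _ => ⟨by omega, by omega⟩⟩
        · exact Or.inr fun y => ⟨fun i h => absurd h (hz i), fun h => absurd h hzb⟩
    · intro hc c' hP hc' r' hr'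
      obtain ⟨b1, b2⟩ := (hP b).2 rfl
      have hnear' := fun i => (hP (nu i)).1 i rfl
      obtain ⟨g1, g2⟩ := hnear' g
      have n2 : bht hub r ≠ H + 1 := fun he =>
        hc' (nu g) (main_ext' (hub := hub) (by omega) hr (by omega) (by omega))
      obtain ⟨s1, s2, s3, s4⟩ := surv_move (hub := hub) hr
        (fun j hj => by have := hX j; omega) hr'
      by_cases e2 : bht hub r' = H + 1
      · exact Win.caught (nu g) (main_ext' (hub := hub) (by omega) s1 (by omega) (by omega))
      refine ih c' r' (by omega) (fun i => ⟨?_, (hnear' i).2⟩) (by omega) b1 b2 s1 (by omega)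
        (by omega)
      have h1 := (hnear' i).1
      have h2 := (hnear i).1
      omega

theorem adj_mk {v w : PV k R M} (h : adj hub v w) : (graph k hub).Adj v w := h

/-- A move to a neighbour of the survivor. -/
theorem closer_one {x y r : PV k R M} (hxr : x ≠ r) (hna : ¬ (graph k hub).Adj x r)
    (hyr : (graph k hub).Adj y r) : (graph k hub).dist y r < (graph k hub).dist x r := by
  rw [dist_eq_one_iff_adj.mpr hyr]
  exact connected.one_lt_dist_of_ne_of_not_adj hxr hna

/-- A move to distance two. -/
theorem closer_two {x y w r : PV k R M} (hxr : x ≠ r) (hna : ¬ (graph k hub).Adj x r)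
    (hcn : ∀ u, (graph k hub).Adj x u → ¬ (graph k hub).Adj u r)
    (hyw : (graph k hub).Adj y w) (hwr : (graph k hub).Adj w r) :
    (graph k hub).dist y r < (graph k hub).dist x r := by
  have h1 : (graph k hub).dist y r ≤ 2 := dist_le (Walk.cons hyw (Walk.cons hwr Walk.nil))
  have h2 : (graph k hub).dist x r ≠ 2 := by
    intro h
    obtain ⟨p, hp⟩ := connected.exists_walk_length_eq_dist (G := graph k hub) x r
    rw [h] at hp
    cases p with
    | nil => simp at hp
    | cons ha q =>
      cases q with
      | nil => simp at hp
      | cons hb q =>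
        cases q with
        | nil => exact hcn _ ha hb
        | cons hc q => simp at hp
  have h3 := connected.one_lt_dist_of_ne_of_not_adj (G := graph k hub) hxr hna
  omega

/-- The survivor starts inside gadget `j`. -/
theorem gadget_win (c : Fin n → PV k R M) (r : PV k R M) (j j' : Fin M) (hj : j' ≠ j)
    (hhub : hub j' = hub j) (a b d : Fin n) (ha : c a = inn j 0) (hb : c b = out j 2)
    (hd : c d = inn j' 0) (hr : (∃ t, r = inn j t) ∨ ∃ t, r = out j t) : ZWin hub c r := by
  have hab : a ≠ b := by rintro rfl; rw [ha] at hb; cases hb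
  have had : a ≠ d := by rintro rfl; rw [ha] at hd; exact hj (by injection hd with h; exact h.symm)
  have hbd : b ≠ d := by rintro rfl; rw [hb] at hd; cases hd
  -- survivor at an inner vertex which is not immediately caught
  have inner : ∀ t y, (inn j t : PV k R M) ≠ inn j 0 → adj hub (out j 2 : PV k R M) (out j y) →
      (graph k hub).dist (out j y) (inn j t) < (graph k hub).dist (out j 2) (inn j t) →
      (out j t : PV k R M) = out j y ∨ (graph k hub).Adj (out j y : PV k R M) (out j t) →
      ZWin hub c (inn j t) := by
    intro t y ht hy hdist hcov
    refine zwin_move connected c _ (fun i z => (i = a → z = sp (hub j)) ∧ (i = b → z = out j y))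
      ?_ ?_
    · intro hc i
      by_cases hia : i = a
      · subst hia
        refine Or.inl ⟨sp (hub j), ?_, ?_, fun _ => rfl, fun h => absurd h hab⟩
        · rw [ha]; exact adj_mk rfl
        · rw [ha]
          exact closer_one ht.symm (fun h => h) (adj_mk rfl)
      by_cases hib : i = b
      · subst hib
        refine Or.inl ⟨out j y, ?_, ?_, fun h => absurd h hia, fun _ => rfl⟩
        · rw [hb]; exact hy
        · rw [hb]; exact hdist
      exact Or.inr fun z => ⟨fun h => absurd h hia, fun h => absurd h hib⟩
    · intro hc c' hP hc' r' hr'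
      have a1 := (hP a).1 rfl
      have b1 := (hP b).2 rfl
      rcases hr' with rfl | hr'
      · exact zwin_adj connected c' _ a (Or.inr (by rw [a1]; exact adj_mk rfl))
      · change adj hub _ _ at hr'
        cases r' <;> simp only [adj] at hr'
        case sp i => subst hr'; exact Win.caught a a1
        case out j1 t1 =>
          obtain ⟨rfl, rfl⟩ := hr'
          refine zwin_adj connected c' _ b ?_
          rw [b1]
          rcases hcov with h | h
          · exact Or.inl h.symm
          · exact Or.inr h
  rcases hr with ⟨t, rfl⟩ | ⟨t, rfl⟩
  · fin_cases t
    · exact Win.caught a ha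
    · refine inner 1 1 (by simp) ⟨rfl, Or.inr rfl⟩ ?_ (Or.inl rfl)
      exact closer_one (by simp) (by rintro ⟨_, h⟩; revert h; decide) (adj_mk ⟨rfl, rfl⟩)
    · exact zwin_adj connected c _ b (Or.inr (by rw [hb]; exact adj_mk ⟨rfl, rfl⟩))
    · refine inner 3 3 (by simp) ⟨rfl, Or.inl rfl⟩ ?_ (Or.inl rfl)
      exact closer_one (by simp) (by rintro ⟨_, h⟩; revert h; decide) (adj_mk ⟨rfl, rfl⟩)
    · refine inner 4 3 (by simp) ⟨rfl, Or.inl rfl⟩ ?_ (Or.inr (adj_mk ⟨rfl, Or.inl rfl⟩))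
      refine closer_two (w := out j 4) (by simp) (by rintro ⟨_, h⟩; revert h; decide) ?_
        (adj_mk ⟨rfl, Or.inl rfl⟩) (adj_mk ⟨rfl, rfl⟩)
      intro u hu hu'
      change adj hub _ _ at hu
      change adj hub _ _ at hu'
      cases u <;> simp only [adj] at hu hu'
      obtain ⟨rfl, h1⟩ := hu
      obtain ⟨_, rfl⟩ := hu'
      revert h1; decide
  · fin_cases t
    · exact zwin_adj connected c _ a (Or.inr (by rw [ha]; exact adj_mk ⟨rfl, rfl⟩))
    · exact zwin_adj connected c _ b (Or.inr (by rw [hb]; exact adj_mk ⟨rfl, Or.inr rfl⟩))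
    · exact Win.caught b hb
    · exact zwin_adj connected c _ b (Or.inr (by rw [hb]; exact adj_mk ⟨rfl, Or.inl rfl⟩))
    · change ZWin hub c (out j 4)
      refine zwin_move connected c _ (fun i z => (i = a → z = out j 0) ∧ (i = b → z = out j 3) ∧
        (i = d → z = sp (hub j))) ?_ ?_
      · intro hc i
        by_cases hia : i = a
        · subst hia
          refine Or.inl ⟨out j 0, ?_, ?_, fun _ => rfl, fun h => absurd h hab, fun h => absurd h had⟩
          · rw [ha]; exact adj_mk ⟨rfl, rfl⟩
          · rw [ha]
            exact closer_one (by simp) (by rintro ⟨_, h⟩; revert h; decide)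
              (adj_mk ⟨rfl, Or.inr rfl⟩)
        by_cases hib : i = b
        · subst hib
          refine Or.inl ⟨out j 3, ?_, ?_, fun h => absurd h hia, fun _ => rfl, fun h => absurd h hbd⟩
          · rw [hb]; exact adj_mk ⟨rfl, Or.inl rfl⟩
          · rw [hb]
            exact closer_one (by simp) (by rintro ⟨_, h⟩; revert h; decide)
              (adj_mk ⟨rfl, Or.inl rfl⟩)
        by_cases hid : i = d
        · subst hid
          refine Or.inl ⟨sp (hub j), ?_, ?_, fun h => absurd h hia, fun h => absurd h hib,
            fun _ => rfl⟩
          · rw [hd]; exact adj_mk hhub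
          · rw [hd]
            refine closer_two (w := inn j 4) (by simp) (by rintro ⟨h, _⟩; exact hj h) ?_
              (adj_mk rfl) (adj_mk ⟨rfl, rfl⟩)
            intro u hu hu'
            change adj hub _ _ at hu
            change adj hub _ _ at hu'
            cases u <;> simp only [adj] at hu hu'
            exact hj (hu.1.trans hu'.1)
        exact Or.inr fun z => ⟨fun h => absurd h hia, fun h => absurd h hib, fun h => absurd h hid⟩
      · intro hc c' hP hc' r' hr'
        have a1 := (hP a).1 rfl
        have b1 := (hP b).2.1 rfl
        have d1 := (hP d).2.2 rfl
        rcases hr' with rfl | hr'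
        · exact zwin_adj connected c' _ a (Or.inr (by rw [a1]; exact adj_mk ⟨rfl, Or.inr rfl⟩))
        · change adj hub _ _ at hr'
          cases r' <;> simp only [adj] at hr'
          case inn j1 t1 =>
            obtain ⟨rfl, rfl⟩ := hr'
            exact zwin_adj connected c' _ d (Or.inr (by rw [d1]; exact adj_mk rfl))
          case out j1 t1 =>
            obtain ⟨rfl, h⟩ := hr'
            have : t1 = 0 ∨ t1 = 3 := by revert h; revert t1; decide
            rcases this with rfl | rfl
            · exact Win.caught a a1
            · exact Win.caught b b1

/-- The opening configuration wins everywhere. -/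
theorem zombie_opening (hk : 0 < k) (X : ℕ) (hXN : X = k * (k + 1) + 4) (M1 : ℕ) (hM : M = M1 + 2)
    (hM1 : 2 ≤ M1) (hkM : k ≤ 2 * M1) (hR : R + 1 = 2 * X)
    (hnear : ∀ j : Fin M, j.val < M1 → (hub j).val + 1 = X)
    (hfar : ∀ j : Fin M, M1 ≤ j.val → (hub j).val + 2 = 2 * X)
    (c : Fin (2 * M) → PV k R M)
    (hc1 : ∀ j : Fin M, c ⟨2 * j.val, by omega⟩ = inn j 0)
    (hc2 : ∀ j : Fin M, c ⟨2 * j.val + 1, by omega⟩ = out j 2) (r : PV k R M) : ZWin hub c r := by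
  have hXk : 4 ≤ X := by omega
  have hX : ∀ j, X ≤ (hub j).val + 1 := by
    intro j
    by_cases h : j.val < M1
    · have := hnear j h; omega
    · have := hfar j (by omega); omega
  have hgad : ∀ j, ((∃ t, r = inn j t) ∨ ∃ t, r = out j t) → ZWin hub c r := by
    intro j hr
    obtain ⟨j', hj', hh'⟩ : ∃ j', j' ≠ j ∧ hub j' = hub j := by
      by_cases h : j.val < M1
      · by_cases h0 : j.val = 0
        · refine ⟨⟨1, by omega⟩, ?_, Fin.ext ?_⟩
          · intro h; rw [← h] at h0; simp at h0
          · have := hnear ⟨1, by omega⟩ (by simp; omega); have := hnear j h; omega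
        · refine ⟨⟨0, by omega⟩, ?_, Fin.ext ?_⟩
          · intro h; rw [← h] at h0; simp at h0
          · have := hnear ⟨0, by omega⟩ (by simp; omega); have := hnear j h; omega
      · by_cases h0 : j.val = M1
        · refine ⟨⟨M1 + 1, by omega⟩, ?_, Fin.ext ?_⟩
          · intro h; rw [← h] at h0; simp at h0
          · have := hfar ⟨M1 + 1, by omega⟩ (by simp); have := hfar j (by omega); omega
        · refine ⟨⟨M1, by omega⟩, ?_, Fin.ext ?_⟩
          · intro h; rw [← h] at h0; simp at h0
          · have := hfar ⟨M1, by omega⟩ (by simp); have := hfar j (by omega); omega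
    exact gadget_win c r j j' hj' hh' _ _ _ (hc1 j) (hc2 j) (hc1 j') hr
  have hj0 : (0 : ℕ) < M := by omega
  have hjf : M1 < M := by omega
  have hn0 := hnear ⟨0, hj0⟩ (by simp; omega)
  have hf0 := hfar ⟨M1, hjf⟩ (by simp)
  -- survivor outside the gadgets
  have hmain : ex r = 0 → ZWin hub c r := by
    intro hr
    have hrR : bht hub r ≤ R := by
      cases r <;> simp at * <;> omega
    rcases lt_trichotomy (bht hub r) X with hp | hp | hp
    · -- below the near hubs
      let nu : Fin k → Fin (2 * M) := fun i => ⟨i.val, by omega⟩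
      have hnu : Function.Injective nu := by
        intro i i' h
        simp [nu] at h
        exact Fin.ext h
      have hpos : ∀ i : Fin k, bht hub (c (nu i)) = X ∧ (ex (c (nu i)) = 1 ∨ ex (c (nu i)) = 2) := by
        intro i
        have hlt : i.val / 2 < M1 := by omega
        have hh := hnear ⟨i.val / 2, by omega⟩ hlt
        rcases Nat.mod_two_eq_zero_or_one i.val with h | h
        · have : nu i = ⟨2 * (⟨i.val / 2, by omega⟩ : Fin M).val, by simp; omega⟩ := by
            apply Fin.ext; simp [nu]; omega
          rw [this, hc1]
          exact ⟨hh, Or.inl rfl⟩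
        · have : nu i = ⟨2 * (⟨i.val / 2, by omega⟩ : Fin M).val + 1, by simp; omega⟩ := by
            apply Fin.ext; simp [nu]; omega
          rw [this, hc2]
          exact ⟨hh, Or.inr rfl⟩
      have hg : c (nu ⟨0, hk⟩) = inn ⟨0, hj0⟩ 0 := hc1 ⟨0, hj0⟩
      refine alphaOne hk nu hnu ⟨2 * M1, by omega⟩ ⟨0, hk⟩ X hX hXN X c r le_rfl ?_ ?_ ?_ ?_ hr
        (by omega) hp
      · intro i
        have := hpos i
        exact ⟨by omega, fun _ => this.1⟩
      · rw [hg, bht_inn, ex_inn]; omega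
      · rw [hc1 ⟨M1, hjf⟩, bht_inn, ex_inn]; omega
      · intro _
        rw [hc1 ⟨M1, hjf⟩, bht_inn]; omega
    · refine zwin_adj connected c r ⟨0, by omega⟩ (Or.inr ?_)
      have h0 : c ⟨0, by omega⟩ = inn ⟨0, hj0⟩ 0 := hc1 ⟨0, hj0⟩
      rw [h0]
      cases r with
      | sp i => exact adj_mk (Fin.ext (by simp at hp; omega))
      | core x => simp at hp; omega
      | inn j t => simp at hr
      | out j t => simp at hr
    · -- between the hubs
      by_cases hpY : bht hub r + 1 = 2 * X
      · refine zwin_adj connected c r ⟨2 * M1, by omega⟩ (Or.inr ?_)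
        rw [hc1 ⟨M1, hjf⟩]
        cases r with
        | sp i => exact adj_mk (Fin.ext (by simp at hpY; omega))
        | core x => simp at hp
        | inn j t => simp at hr
        | out j t => simp at hr
      have h0 : c ⟨0, by omega⟩ = inn ⟨0, hj0⟩ 0 := hc1 ⟨0, hj0⟩
      have h1 : c ⟨2 * M1, by omega⟩ = inn ⟨M1, hjf⟩ 0 := hc1 ⟨M1, hjf⟩
      refine zwin_main c r hr (fun i y => (i = ⟨0, by omega⟩ → y = sp (hub ⟨0, hj0⟩)) ∧
        (i = ⟨2 * M1, by omega⟩ → y = sp (hub ⟨M1, hjf⟩))) ?_ ?_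
      · intro hc i
        by_cases hi0 : i = ⟨0, by omega⟩
        · subst hi0
          refine Or.inl ⟨_, ?_, ?_, fun _ => rfl, fun h => ?_⟩
          · rw [h0]; exact adj_mk rfl
          · rw [h0]; simp [mdist]
          · simp at h; omega
        by_cases hi1 : i = ⟨2 * M1, by omega⟩
        · subst hi1
          refine Or.inl ⟨_, ?_, ?_, fun h => absurd h hi0, fun _ => rfl⟩
          · rw [h1]; exact adj_mk rfl
          · rw [h1]; simp [mdist]
        exact Or.inr fun y => ⟨fun h => absurd h hi0, fun h => absurd h hi1⟩
      · intro hc c' hP hc' r' hr'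
        have a1 := (hP _).1 rfl
        have b1 := (hP _).2 rfl
        have hnh : ∀ j, ¬ (X < (hub j).val + 1 ∧ (hub j).val + 2 < 2 * X) := by
          intro j hj
          by_cases h : j.val < M1
          · have := hnear j h; omega
          · have := hfar j (by omega); omega
        obtain ⟨s1, s2, s3, s4⟩ := surv_move (hub := hub) hr
          (fun j hj => hnh j (by omega)) hr'
        refine sandwich' ⟨0, by omega⟩ ⟨2 * M1, by omega⟩ c' r' s1 ?_ ?_ ?_
          (sh_of_bht (hub := hub) (by omega)) ?_ ?_ ?_
        · rw [a1]; rfl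
        · rw [b1]; rfl
        · rw [a1]; rfl
        · rw [a1, bht_sp]; omega
        · rw [b1, bht_sp]; omega
        · intro j
          rw [a1, b1, bht_sp, bht_sp]
          have := hnh j
          omega
  cases r with
  | core x => exact hmain rfl
  | sp i => exact hmain rfl
  | inn j t => exact hgad j (Or.inl ⟨t, rfl⟩)
  | out j t => exact hgad j (Or.inr ⟨t, rfl⟩)

end PV

namespace PV
variable {k R M : ℕ} {hub : Fin M → Fin R} {n : ℕ}

/-! ### Too few zombies lose -/

/-- The gadget containing a vertex. -/
def gad : PV k R M → Option (Fin M)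
  | inn j _ => some j
  | out j _ => some j
  | _ => none

theorem near_of_closer {x w y r : PV k R M} (h : (graph k hub).dist y r < (graph k hub).dist x r)
    (h1 : (graph k hub).Adj x w) (h2 : (graph k hub).Adj w r) :
    y = r ∨ (graph k hub).Adj y r := by
  have h3 : (graph k hub).dist x r ≤ 2 := dist_le (Walk.cons h1 (Walk.cons h2 Walk.nil))
  by_cases h0 : y = r
  · exact Or.inl h0
  · right
    by_contra hna
    have := connected.one_lt_dist_of_ne_of_not_adj (G := graph k hub) h0 hna
    omega

theorem f5a : ∀ s : Fin 5, s + 1 + 4 = s := by decide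
theorem f5b : ∀ s : Fin 5, s + 2 + 3 = s := by decide
theorem f5c : ∀ s : Fin 5, s ≠ s + 3 := by decide
theorem f5d : ∀ s : Fin 5, s = s + 4 + 1 := by decide
theorem f5e : ∀ s : Fin 5, s + 4 = s + 3 + 1 := by decide
theorem f5f : ∀ s : Fin 5, s ≠ s + 4 := by decide
theorem f5g : ∀ s : Fin 5, s + 1 + 3 = s + 4 := by decide
theorem f5h : ∀ s t : Fin 5, (t = s + 3 + 1 ∨ s + 3 = t + 1) → (t = s ∨ s = t + 1 ∨ t = s + 1) →
    t = s + 4 := by decide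

theorem key_out {j : Fin M} {s : Fin 5} {x y : PV k R M} (ha : (graph k hub).Adj x y)
    (hd : (graph k hub).dist y (out j s) < (graph k hub).dist x (out j s))
    (h : gad x ≠ some j) : gad y ≠ some j ∨ y = inn j s ∨ y = out j (s + 4) := by
  by_cases hg : gad y = some j
  · right
    left
    change adj hub x y at ha
    cases x <;> cases y <;> simp only [adj] at ha <;>
      simp only [gad, ne_eq, reduceCtorEq, not_false_eq_true, Option.some.injEq] at h hg
    · subst hg
      subst ha
      rcases near_of_closer (w := inn _ s) hd (adj_mk rfl) (adj_mk ⟨rfl, rfl⟩) with e | e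
      · cases e
      · rw [e.2]
    · exact absurd (ha.1.trans hg) h
    · exact absurd (ha.1.trans hg) h
    · exact absurd (ha.1.trans hg) h
  · exact Or.inl hg

theorem key_inn {j : Fin M} {s : Fin 5} {y : PV k R M} (ha : (graph k hub).Adj (inn j (s + 4)) y)
    (hd : (graph k hub).dist y (out j s) < (graph k hub).dist (inn j (s + 4)) (out j s)) :
    y = out j (s + 4) := by
  have hnear := near_of_closer (w := out j (s + 4)) hd (adj_mk ⟨rfl, rfl⟩)
    (adj_mk ⟨rfl, Or.inl (f5d s)⟩)
  change adj hub _ y at ha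
  cases y <;> simp only [adj] at ha
  · rcases hnear with e | e
    · cases e
    · exact absurd e (fun h => h)
  · rw [ha.1, ha.2]

theorem key_ring {j : Fin M} {s : Fin 5} {y : PV k R M} (ha : (graph k hub).Adj (out j (s + 3)) y)
    (hd : (graph k hub).dist y (out j s) < (graph k hub).dist (out j (s + 3)) (out j s)) :
    y = out j (s + 4) := by
  have hnear := near_of_closer (w := out j (s + 4)) hd (adj_mk ⟨rfl, Or.inl (f5e s)⟩)
    (adj_mk ⟨rfl, Or.inl (f5d s)⟩)
  change adj hub _ y at ha
  cases y <;> simp only [adj] at ha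
  · rcases hnear with e | e
    · cases e
    · exfalso
      have e2 := e.2
      rw [← ha.2] at e2
      exact f5c s e2.symm
  · obtain ⟨rfl, ht⟩ := ha
    congr 1
    refine f5h s _ ht ?_
    rcases hnear with e | e
    · injection e with _ e
      exact Or.inl e
    · exact Or.inr e.2

theorem zombies_lose (hn : n < 2 * M) : ¬ ZombiesWinWith (graph k hub) n := by
  apply not_zombiesWinWith
  intro z
  obtain ⟨o, ho, hcard⟩ := Finset.exists_card_fiber_lt_of_card_lt_mul
    (s := (Finset.univ : Finset (Fin n))) (t := (Finset.univ : Finset (Fin M)).map ⟨some, Option.some_injective _⟩)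
    (f := fun i => gad (z i)) (n := 2) (by simp; omega)
  simp only [Finset.mem_map, Finset.mem_univ, true_and, Function.Embedding.coeFn_mk] at ho
  obtain ⟨j, rfl⟩ := ho
  have huniq : ∀ i i', gad (z i) = some j → gad (z i') = some j → i = i' := by
    intro i i' h h'
    have h1 : ({x ∈ (Finset.univ : Finset (Fin n)) | gad (z x) = some j}).card ≤ 1 := by omega
    exact Finset.card_le_one.mp h1 i (by simpa using h) i' (by simpa using h')
  refine ⟨fun c r => ∃ s, r = out j s ∧ ∀ i, gad (c i) ≠ some j ∨ c i = inn j (s + 4) ∨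
    c i = out j (s + 3), ?_⟩
  have hstart : ∃ s : Fin 5, ∀ i, gad (z i) ≠ some j ∨ z i = inn j (s + 4) ∨ z i = out j (s + 3) := by
    by_cases hex : ∃ i, gad (z i) = some j
    · obtain ⟨i0, hi0⟩ := hex
      obtain ⟨s, hs⟩ : ∃ s : Fin 5, z i0 = inn j (s + 4) ∨ z i0 = out j (s + 3) := by
        cases hz : z i0 with
        | core x => rw [hz] at hi0; simp [gad] at hi0
        | sp x => rw [hz] at hi0; simp [gad] at hi0
        | inn j' t =>
          rw [hz] at hi0
          simp [gad] at hi0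
          subst hi0
          refine ⟨t + 1, Or.inl ?_⟩
          rw [f5a]
        | out j' t =>
          rw [hz] at hi0
          simp [gad] at hi0
          subst hi0
          refine ⟨t + 2, Or.inr ?_⟩
          rw [f5b]
      refine ⟨s, fun i => ?_⟩
      by_cases hi : gad (z i) = some j
      · rw [huniq i i0 hi hi0]
        exact Or.inr hs
      · exact Or.inl hi
    · push Not at hex
      exact ⟨0, fun i => Or.inl (hex i)⟩
  obtain ⟨s, hs⟩ := hstart
  refine ⟨out j s, ⟨s, rfl, hs⟩, ?_, ?_⟩
  · rintro c r ⟨s, rfl, h⟩ i hi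
    rcases h i with h | h | h
    · rw [hi] at h; exact h rfl
    · rw [hi] at h; cases h
    · rw [hi] at h
      injection h with _ h
      exact f5c s h
  · rintro c r c' ⟨s, rfl, h⟩ hstep
    have key : ∀ i, gad (c' i) ≠ some j ∨ c' i = inn j s ∨ c' i = out j (s + 4) := by
      intro i
      obtain ⟨ha, hd⟩ := hstep i
      rcases h i with h | h | h
      · exact key_out ha hd h
      · rw [h] at ha hd
        exact Or.inr (Or.inr (key_inn ha hd))
      · rw [h] at ha hd
        exact Or.inr (Or.inr (key_ring ha hd))
    refine ⟨fun i hi => ?_, out j (s + 1), Or.inr (adj_mk ⟨rfl, Or.inl rfl⟩), s + 1, rfl,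
      fun i => ?_⟩
    · rcases key i with e | e | e
      · rw [hi] at e; exact e rfl
      · rw [hi] at e; cases e
      · rw [hi] at e
        injection e with _ e
        exact f5f s e
    · rw [f5a, f5g]
      exact key i

/-! ### Too few cops lose -/

/-- A value different from the given one. -/
def shift (a : Fin 3) (e : Fin 2) : Fin 3 := a + (if e = 0 then 1 else 2)

theorem shift_ne (a : Fin 3) (e : Fin 2) : shift a e ≠ a := by revert a e; decide

theorem exists_shift (a b : Fin 3) (h : b ≠ a) : ∃ e, b = shift a e := by revert a b; decide

theorem shift_inj (a : Fin 3) (e e' : Fin 2) (h : shift a e = shift a e') : e = e' := by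
  revert a e e'; decide

/-- Being equal or adjacent to a core vertex. -/
theorem near_core (hk : 0 < k) {v : PV k R M} {y : Fin k → Fin 3}
    (h : v = core y ∨ (graph k hub).Adj v (core y)) :
    ((∃ m, ∀ m', m' ≠ m → sh v m' = y m')) ∧ ((∀ x, v ≠ core x) → y = 0) := by
  rcases h with rfl | h
  · exact ⟨⟨⟨0, hk⟩, fun _ _ => rfl⟩, fun h => absurd rfl (h y)⟩
  · change adj hub _ _ at h
    cases v <;> simp only [adj] at h
    case core x =>
      obtain ⟨l, _, h2⟩ := h
      exact ⟨⟨l, h2⟩, fun h => absurd rfl (h x)⟩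
    case sp i =>
      refine ⟨⟨⟨0, hk⟩, fun m' _ => ?_⟩, fun _ => h.1⟩
      rw [h.1]; rfl

open Classical in
theorem blocked_card (hk : 0 < k) (v : PV k R M) (y : Fin k → Fin 3) (hv : v ≠ core y) :
    (Finset.univ.filter fun p : Fin k × Fin 2 =>
      v = core (Function.update y p.1 (shift (y p.1) p.2)) ∨
      (graph k hub).Adj v (core (Function.update y p.1 (shift (y p.1) p.2)))).card ≤ 2 := by
  by_cases hs : sh v = y
  · have : (Finset.univ.filter fun p : Fin k × Fin 2 =>
      v = core (Function.update y p.1 (shift (y p.1) p.2)) ∨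
      (graph k hub).Adj v (core (Function.update y p.1 (shift (y p.1) p.2)))) = ∅ := by
      apply Finset.filter_eq_empty_iff.mpr
      rintro ⟨l, e⟩ _ h
      have hnc : ∀ x, v ≠ core x := by
        rintro x rfl
        simp at hs
        exact hv (by rw [hs])
      have h2 := (near_core hk h).2 hnc
      have hy : y = 0 := by
        rw [← hs]
        cases v with
        | core x => exact absurd rfl (hnc x)
        | _ => rfl
      have := congrFun h2 l
      rw [hy] at this
      simp at this
      exact shift_ne _ _ this
    rw [this]
    simp
  obtain ⟨l1, hl1⟩ := exists_ne_coord hs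
  obtain ⟨e1, he1⟩ := exists_shift _ _ hl1
  by_cases h2 : ∃ l2, l2 ≠ l1 ∧ sh v l2 ≠ y l2
  · obtain ⟨l2, hl21, hl2⟩ := h2
    obtain ⟨e2, he2⟩ := exists_shift _ _ hl2
    refine (Finset.card_le_card (t := {(l1, e1), (l2, e2)}) ?_).trans Finset.card_le_two
    rintro ⟨l, e⟩ hp
    simp only [Finset.mem_filter, Finset.mem_univ, true_and] at hp
    obtain ⟨m, hm⟩ := (near_core hk hp).1
    simp only [Finset.mem_insert, Finset.mem_singleton, Prod.mk.injEq]
    by_cases hll1 : l = l1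
    · left
      subst hll1
      refine ⟨rfl, ?_⟩
      have hm2 : l2 = m := by
        by_contra hne
        have := hm l2 hne
        rw [Function.update_of_ne hl21] at this
        exact hl2 this
      have := hm l (by rw [← hm2]; exact hl21.symm)
      rw [Function.update_self, he1] at this
      exact (shift_inj _ _ _ this).symm
    · have hm1 : l1 = m := by
        by_contra hne
        have := hm l1 hne
        rw [Function.update_of_ne (Ne.symm hll1)] at this
        exact hl1 this
      by_cases hll2 : l = l2
      · right
        subst hll2
        refine ⟨rfl, ?_⟩
        have := hm l (by rw [← hm1]; exact hll1)
        rw [Function.update_self, he2] at this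
        exact (shift_inj _ _ _ this).symm
      · exfalso
        have := hm l2 (by rw [← hm1]; exact hl21)
        rw [Function.update_of_ne (Ne.symm hll2)] at this
        exact hl2 this
  · push Not at h2
    refine (Finset.card_le_card (t := {(l1, 0), (l1, 1)}) ?_).trans Finset.card_le_two
    rintro ⟨l, e⟩ hp
    simp only [Finset.mem_filter, Finset.mem_univ, true_and] at hp
    obtain ⟨m, hm⟩ := (near_core hk hp).1
    simp only [Finset.mem_insert, Finset.mem_singleton, Prod.mk.injEq]
    have hll1 : l = l1 := by
      by_contra hll1
      have hm1 : l1 = m := by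
        by_contra hne
        have := hm l1 hne
        rw [Function.update_of_ne (Ne.symm hll1)] at this
        exact hl1 this
      have h3 := hm l (by rw [← hm1]; exact hll1)
      rw [Function.update_self, h2 l hll1] at h3
      exact shift_ne _ _ h3.symm
    have : e = 0 ∨ e = 1 := (by decide : ∀ e : Fin 2, e = 0 ∨ e = 1) e
    rcases this with rfl | rfl
    · exact Or.inl ⟨hll1, rfl⟩
    · exact Or.inr ⟨hll1, rfl⟩

theorem cop_escape (hn : n < k) (c : Fin n → PV k R M) (y : Fin k → Fin 3)
    (hc : ∀ i, c i ≠ core y) :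
    ∃ y', HAdj y y' ∧ ∀ i, ¬ (c i = core y' ∨ (graph k hub).Adj (c i) (core y')) := by
  classical
  by_contra! hcon
  have hcov : (Finset.univ : Finset (Fin k × Fin 2)) ⊆ (Finset.univ : Finset (Fin n)).biUnion
      fun i => Finset.univ.filter fun p : Fin k × Fin 2 =>
      c i = core (Function.update y p.1 (shift (y p.1) p.2)) ∨
      (graph k hub).Adj (c i) (core (Function.update y p.1 (shift (y p.1) p.2))) := by
    rintro ⟨l, e⟩ _
    obtain ⟨i, hi⟩ := hcon (Function.update y l (shift (y l) e))
      (hadj_update y l _ (shift_ne _ _).symm)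
    simp only [Finset.mem_biUnion, Finset.mem_filter, Finset.mem_univ, true_and]
    exact ⟨i, hi⟩
  have h1 := Finset.card_le_card hcov
  have h2 := Finset.card_biUnion_le_card_mul (Finset.univ : Finset (Fin n))
    (fun i => Finset.univ.filter fun p : Fin k × Fin 2 =>
      c i = core (Function.update y p.1 (shift (y p.1) p.2)) ∨
      (graph k hub).Adj (c i) (core (Function.update y p.1 (shift (y p.1) p.2)))) 2
    (fun i _ => by
      convert blocked_card (hub := hub) (by omega) (c i) y (hc i))
  have h3 := h1.trans h2
  simp at h3
  omega

theorem cops_lose (hn : n < k) : ¬ CopsWinWith (graph k hub) n := by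
  apply not_copsWinWith
  intro z
  have hfree : ∃ y, ∀ i, z i ≠ core y := by
    by_contra! hcon
    choose f hf using hcon
    have hinj : Function.Injective f := by
      intro y y' h
      have := hf y
      rw [h, hf y'] at this
      injection this with this
      exact this.symm
    have h1 := Fintype.card_le_of_injective f hinj
    simp at h1
    have := Nat.lt_pow_self (n := k) (show 1 < 3 by omega)
    omega
  obtain ⟨y0, hy0⟩ := hfree
  obtain ⟨y, _, hy⟩ := cop_escape (hub := hub) hn z y0 hy0
  refine ⟨fun c r => ∃ y, r = core y ∧ ∀ i, ¬ (c i = core y ∨ (graph k hub).Adj (c i) (core y)),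
    core y, ⟨y, rfl, hy⟩, ?_, ?_⟩
  · rintro c r ⟨y, rfl, h⟩ i hi
    exact h i (Or.inl hi)
  · rintro c r c' ⟨y, rfl, h⟩ hstep
    have hne : ∀ i, c' i ≠ core y := by
      intro i hi
      rcases hstep i with hs | hs
      · exact h i (Or.inl (hs ▸ hi))
      · rw [hi] at hs
        exact h i (Or.inr hs)
    obtain ⟨y', h1, h2⟩ := cop_escape (hub := hub) hn c' y hne
    exact ⟨hne, core y', Or.inr (adj_mk h1), y', rfl, h2⟩

end PV

namespace PV
variable {k R M : ℕ} {hub : Fin M → Fin R} {n : ℕ}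

/-! ### Enough cops win -/

/-- The cops win. -/
abbrev CWin (hub : Fin M → Fin R) (c : Fin n → PV k R M) (r : PV k R M) : Prop :=
  Win (graph k hub) (CStep (graph k hub)) c r

theorem adj_info {r r' : PV k R M} (h : r' = r ∨ (graph k hub).Adj r r') :
    bht hub r ≤ bht hub r' + 1 ∧ (bht hub r ≠ bht hub r' → ex r = 0 ∧ ex r' = 0) ∧
      (sh r' = sh r ∨ HAdj (sh r) (sh r')) ∧ (0 < bht hub r → sh r' = 0) := by
  rcases h with rfl | h
  · exact ⟨by omega, fun h => absurd rfl h, Or.inl rfl, fun h => sh_of_bht h⟩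
  change adj hub r r' at h
  cases r <;> cases r' <;> simp only [adj] at h <;> simp only [ex_core, ex_sp, ex_inn, ex_out,
    bht_core, bht_sp, bht_inn, bht_out, sh_core, sh_sp, sh_inn, sh_out]
  case core.core => exact ⟨by omega, fun h => absurd rfl h, Or.inr h, fun h => by omega⟩
  case core.sp => exact ⟨by omega, fun _ => ⟨trivial, trivial⟩, Or.inl h.1.symm, fun h => by omega⟩
  case sp.core => exact ⟨by omega, fun _ => ⟨trivial, trivial⟩, Or.inl h.1, fun _ => h.1⟩
  case sp.sp => exact ⟨by omega, fun _ => ⟨trivial, trivial⟩, Or.inl trivial, fun _ => trivial⟩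
  case sp.inn =>
    subst h
    exact ⟨by omega, fun h => absurd rfl h, Or.inl trivial, fun _ => trivial⟩
  case inn.sp =>
    subst h
    exact ⟨by omega, fun h => absurd rfl h, Or.inl trivial, fun _ => trivial⟩
  all_goals
    obtain ⟨rfl, _⟩ := h
    exact ⟨by omega, fun h => absurd rfl h, Or.inl trivial, fun _ => trivial⟩

/-- Five cops standing in a gadget's hub clear the gadget. -/
theorem cop_gadget (hn : 5 ≤ n) (j : Fin M) (r : PV k R M)
    (hr : (∃ t, r = inn j t) ∨ ∃ t, r = out j t) :
    CWin hub (fun _ : Fin n => sp (hub j)) r := by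
  have hs : ∀ r : PV k R M, CStep (graph k hub) (fun _ : Fin n => sp (hub j)) r
      (fun i => if h : i.val < 5 then inn j ⟨i.val, h⟩ else sp (hub j)) := by
    intro r i
    by_cases h : i.val < 5
    · right
      simp only [h, dite_true]
      exact adj_mk rfl
    · left
      simp only [h, dite_false]
  have hin : ∀ t : Fin 5, (if h : (⟨t.val, by omega⟩ : Fin n).val < 5 then
      inn j ⟨(⟨t.val, by omega⟩ : Fin n).val, h⟩ else sp (hub j) : PV k R M) = inn j t := by
    intro t
    have := t.isLt
    simp
  rcases hr with ⟨t, rfl⟩ | ⟨t, rfl⟩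
  · exact Win.capture (hs _) ⟨t.val, by omega⟩ (hin t)
  · refine Win.move (hs _) ?_
    intro r' hr'
    have hcase : r' = inn j t ∨ ∃ t', r' = out j t' := by
      rcases hr' with rfl | h
      · exact Or.inr ⟨t, rfl⟩
      · change adj hub _ _ at h
        cases r' <;> simp only [adj] at h
        · left; rw [h.1, h.2]
        · right; rw [h.1]; exact ⟨_, rfl⟩
    rcases hcase with rfl | ⟨t', rfl⟩
    · exact Win.caught ⟨t.val, by omega⟩ (hin t)
    · refine Win.capture (c' := fun i => if i.val = t'.val then out j t' else
        if h : i.val < 5 then inn j ⟨i.val, h⟩ else sp (hub j)) ?_ ⟨t'.val, by omega⟩ (by simp)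
      intro i
      by_cases hi : i.val = t'.val
      · right
        have h5 : i.val < 5 := by omega
        simp only [hi, if_true, t'.isLt, dite_true]
        exact adj_mk ⟨rfl, rfl⟩
      · left
        simp only [hi, if_false]

/-- All cops climb the spine together. -/
theorem cop_climb (hn : 5 ≤ n) (m : ℕ) : ∀ (v r : PV k R M), ex v = 0 → sh v = 0 →
    R ≤ bht hub v + m → (bht hub v < bht hub r ∨ (bht hub v = bht hub r ∧ 0 < ex r)) →
    CWin hub (fun _ : Fin n => v) r := by
  induction m with
  | zero =>
    intro v r hv hs hm hr
    have hR : bht hub r ≤ R := by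
      cases r <;> simp only [bht_core, bht_sp, bht_inn, bht_out] <;> omega
    rcases hr with hr | ⟨hr, he⟩
    · omega
    · cases r with
      | core x => simp at he
      | sp x => simp at he
      | inn j t =>
        have : v = sp (hub j) := main_ext' (hub := hub) hv rfl hr (by rw [hr]; simp)
        rw [this]
        exact cop_gadget hn j _ (Or.inl ⟨t, rfl⟩)
      | out j t =>
        have : v = sp (hub j) := main_ext' (hub := hub) hv rfl hr (by rw [hr]; simp)
        rw [this]
        exact cop_gadget hn j _ (Or.inr ⟨t, rfl⟩)
  | succ m ih =>
    intro v r hv hs hm hr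
    rcases hr with hr | ⟨hr, he⟩
    · have hR : bht hub r ≤ R := by
        cases r <;> simp only [bht_core, bht_sp, bht_inn, bht_out] <;> omega
      obtain ⟨w, h1, -, h3, h4, h5⟩ := step_up (hub := hub) (v := v)
        (r := sp ⟨bht hub r - 1, by omega⟩) hv hs rfl (by simp only [bht_sp]; omega)
      have hst : CStep (graph k hub) (fun _ : Fin n => v) r (fun _ => w) := fun i => Or.inr h1
      by_cases hc : bht hub r = bht hub w ∧ ex r = 0
      · exact Win.capture hst ⟨0, by omega⟩ (main_ext' (hub := hub) h5 hc.2 hc.1.symm (by omega))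
      · refine Win.move hst ?_
        intro r' hr'
        obtain ⟨a1, a2, -, -⟩ := adj_info hr'
        have hb : bht hub w ≤ bht hub r' := by
          by_contra hlt
          have hx := a2 (by omega)
          exact hc ⟨by omega, hx.1⟩
        by_cases hc' : bht hub r' = bht hub w ∧ ex r' = 0
        · exact Win.caught ⟨0, by omega⟩ (main_ext' (hub := hub) h5 hc'.2 hc'.1.symm (by omega))
        · refine ih w r' h5 h3 (by omega) ?_
          by_cases hbe : bht hub r' = bht hub w
          · exact Or.inr ⟨hbe.symm, Nat.pos_of_ne_zero fun h0 => hc' ⟨hbe, h0⟩⟩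
          · left; omega
    · cases r with
      | core x => simp at he
      | sp x => simp at he
      | inn j t =>
        have : v = sp (hub j) := main_ext' (hub := hub) hv rfl hr (by rw [hr]; simp)
        rw [this]
        exact cop_gadget hn j _ (Or.inl ⟨t, rfl⟩)
      | out j t =>
        have : v = sp (hub j) := main_ext' (hub := hub) hv rfl hr (by rw [hr]; simp)
        rw [this]
        exact cop_gadget hn j _ (Or.inr ⟨t, rfl⟩)

/-- One cop guards the bottom of the spine while the others gather there. -/
theorem cop_gather (hn : 5 ≤ n) (m : ℕ) : ∀ (x : Fin n → Fin k → Fin 3) (a : Fin n) (r : PV k R M),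
    x a = 0 → 0 < bht hub r → (∀ i, hammingDist (x i) 0 ≤ m) →
    CWin hub (fun i => core (x i)) r := by
  induction m with
  | zero =>
    intro x a r hxa hr hm
    have hx : ∀ i, x i = 0 := fun i => by
      have := hm i
      rwa [Nat.le_zero, hammingDist_eq_zero] at this
    have : (fun i => core (x i)) = (fun _ : Fin n => (core 0 : PV k R M)) := by
      funext i; rw [hx i]
    rw [this]
    exact cop_climb hn R _ r rfl rfl (by simp) (Or.inl (by simpa using hr))
  | succ m ih =>
    intro x a r hxa hr hm
    have hstep : ∀ i, ∃ x', (x' = x i ∨ HAdj (x i) x') ∧ hammingDist x' 0 ≤ m ∧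
        (x i = 0 → x' = 0) := by
      intro i
      by_cases h0 : x i = 0
      · exact ⟨0, Or.inl h0.symm, by simp, fun _ => rfl⟩
      · obtain ⟨x', h1, h2⟩ := ham_descent h0
        have := hm i
        exact ⟨x', Or.inr h1, by omega, fun h => absurd h h0⟩
    choose x' h1 h2 h3 using hstep
    refine Win.move (c' := fun i => core (x' i)) ?_ ?_
    · intro i
      rcases h1 i with h | h
      · left; simp only [h]
      · right; exact adj_mk h
    · intro r' hr'
      obtain ⟨-, a2, -, a4⟩ := adj_info hr'
      by_cases hb : 0 < bht hub r'
      · exact ih x' a r' (h3 a hxa) hb h2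
      · have hx := a2 (by omega)
        refine Win.caught a ?_
        rw [h3 a hxa]
        exact main_ext (hub := hub) rfl hx.2 (by simp only [bht_core]; omega) (a4 hr).symm

theorem cop_main (hk : 5 ≤ k) (m : ℕ) : ∀ (x : Fin k → Fin k → Fin 3) (r : PV k R M),
    Psi x (sh r) ≤ m → CWin hub (fun i => core (x i)) r := by
  have hdone : ∀ (x : Fin k → Fin k → Fin 3) (r : PV k R M) (i : Fin k), x i = sh r →
      CWin hub (fun i => core (x i)) r := by
    intro x r i hi
    by_cases hb : 0 < bht hub r
    · exact cop_gather hk k x i r (by rw [hi, sh_of_bht hb]) hb fun i => by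
        simpa using hammingDist_le_card_fintype (x := x i) (y := 0)
    · refine Win.caught i ?_
      cases r <;> simp_all
  induction m using Nat.strong_induction_on with
  | _ m ih =>
    intro x r hm
    by_cases hex : ∃ i, x i = sh r
    · obtain ⟨i, hi⟩ := hex
      exact hdone x r i hi
    · push Not at hex
      obtain ⟨l, hl, h⟩ := ham_round (by omega) x (sh r) hex
      have hst : CStep (graph k hub) (fun i => core (x i)) r
          (fun i => core (Function.update (x i) (l i) (sh r (l i)))) := fun i =>
        Or.inr (adj_mk (hadj_update _ _ _ (hl i)))
      rcases h with ⟨i, hi⟩ | h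
      · by_cases hb : 0 < bht hub r
        · refine Win.move hst ?_
          intro r' hr'
          obtain ⟨-, -, -, a4⟩ := adj_info hr'
          refine hdone _ r' i ?_
          rw [hi, a4 hb, sh_of_bht hb]
        · refine Win.capture hst i ?_
          cases r <;> simp_all
      · refine Win.move hst ?_
        intro r' hr'
        obtain ⟨-, -, a3, -⟩ := adj_info hr'
        exact ih _ (lt_of_lt_of_le (h _ a3) hm) _ r' le_rfl

theorem cops_win (hk : 5 ≤ k) : CopsWinWith (graph k hub) k :=
  ⟨fun _ => core 0, copsCatchFrom_of_win fun s => cop_main hk _ (fun _ => 0) s le_rfl⟩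

end PV

theorem zombieNumber_eq {V : Type} {G : SimpleGraph V} {a : ℕ} (h : ZombiesWinWith G a)
    (h' : ∀ n < a, ¬ ZombiesWinWith G n) : zombieNumber G = a := by
  apply le_antisymm (Nat.sInf_le h)
  by_contra hlt
  exact h' _ (not_le.mp hlt) (Nat.sInf_mem (s := {k | ZombiesWinWith G k}) ⟨a, h⟩)

theorem copNumber_eq {V : Type} {G : SimpleGraph V} {a : ℕ} (h : CopsWinWith G a)
    (h' : ∀ n < a, ¬ CopsWinWith G n) : copNumber G = a := by
  apply le_antisymm (Nat.sInf_le h)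
  by_contra hlt
  exact h' _ (not_le.mp hlt) (Nat.sInf_mem (s := {k | CopsWinWith G k}) ⟨a, h⟩)

theorem one_case : ∃ (V : Type) (G : SimpleGraph V), Finite V ∧ G.Connected ∧
    zombieNumber G = 1 ∧ copNumber G = 1 := by
  refine ⟨Unit, ⊥, inferInstance, ?_, zombieNumber_eq ?_ ?_, copNumber_eq ?_ ?_⟩
  · exact Connected.mk fun v w => by rw [Subsingleton.elim v w]
  · exact ⟨fun _ => (), fun s => zombiesCatchFrom_of_win (Win.caught 0 rfl)⟩
  · intro n hn
    obtain rfl : n = 0 := by omega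
    apply not_zombiesWinWith
    intro z
    exact ⟨fun _ _ => True, (), trivial, fun _ _ _ i => i.elim0,
      fun _ r _ _ _ => ⟨fun i => i.elim0, r, Or.inl rfl, trivial⟩⟩
  · exact ⟨fun _ => (), copsCatchFrom_of_win fun s => Win.caught 0 rfl⟩
  · intro n hn
    obtain rfl : n = 0 := by omega
    apply not_copsWinWith
    intro z
    exact ⟨fun _ _ => True, (), trivial, fun _ _ _ i => i.elim0,
      fun _ r _ _ _ => ⟨fun i => i.elim0, r, Or.inl rfl, trivial⟩⟩

open PV in
theorem main_case (a b : ℕ) (hb : 0 < b) (hab : b < a) :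
    ∃ (V : Type) (G : SimpleGraph V), Finite V ∧ G.Connected ∧
      zombieNumber G = 8 * a ∧ copNumber G = 8 * b := by
  obtain ⟨k, hk⟩ : ∃ k, k = 8 * b := ⟨_, rfl⟩
  obtain ⟨X, hX⟩ : ∃ X, X = k * (k + 1) + 4 := ⟨_, rfl⟩
  obtain ⟨R, hR⟩ : ∃ R, R + 1 = 2 * X := ⟨2 * X - 1, by omega⟩
  obtain ⟨M1, hM1⟩ : ∃ M1, M1 + 2 = 4 * a := ⟨4 * a - 2, by omega⟩
  obtain ⟨M, hM⟩ : ∃ M, M = M1 + 2 := ⟨_, rfl⟩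
  have hub0 : ∃ hub : Fin M → Fin R, (∀ j : Fin M, j.val < M1 → (hub j).val + 1 = X) ∧
      ∀ j : Fin M, M1 ≤ j.val → (hub j).val + 2 = 2 * X := by
    refine ⟨fun j => if j.val < M1 then ⟨X - 1, by omega⟩ else ⟨2 * X - 2, by omega⟩, ?_, ?_⟩
    · intro j hj
      simp only [hj, if_true]
      omega
    · intro j hj
      simp only [not_lt.mpr hj, if_false]
      omega
  obtain ⟨hub, hnear, hfar⟩ := hub0
  have e : 8 * a = 2 * M := by omega
  rw [e, ← hk]
  refine ⟨PV k R M, graph k hub, inferInstance, PV.connected,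
    zombieNumber_eq ?_ fun n hn => zombies_lose hn,
    copNumber_eq (cops_win (by omega)) fun n hn => cops_lose hn⟩
  refine ⟨fun i => if i.val % 2 = 0 then inn ⟨i.val / 2, by omega⟩ 0 else
    out ⟨i.val / 2, by omega⟩ 2, fun s => zombiesCatchFrom_of_win ?_⟩
  refine zombie_opening (by omega) X hX M1 hM (by omega) (by omega) hR hnear hfar _ ?_ ?_ s
  · intro j
    have h1 : 2 * j.val % 2 = 0 := by omega
    have h2 : 2 * j.val / 2 = j.val := by omega
    simp only [h1, if_true, h2]
  · intro j
    have h1 : ¬ (2 * j.val + 1) % 2 = 0 := by omega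
    have h2 : (2 * j.val + 1) / 2 = j.val := by omega
    simp only [h1, if_false, h2]

/-- For every rational number `q ≥ 1` there is a finite connected simple graph `G` with
`z(G) / c(G) = q`, i.e. `z(G) = q * c(G)`. -/
theorem exists_graph_with_zombie_cop_ratio (q : ℚ) (hq : 1 ≤ q) :
    ∃ (V : Type) (G : SimpleGraph V), Finite V ∧ G.Connected ∧
      (zombieNumber G : ℚ) = q * (copNumber G : ℚ) := by
  rcases eq_or_lt_of_le hq with h | h
  · obtain ⟨V, G, h1, h2, h3, h4⟩ := one_case
    exact ⟨V, G, h1, h2, by rw [h3, h4, ← h]; norm_num⟩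
  · have hd : (0 : ℚ) < q.den := by exact_mod_cast q.pos
    have hnum : (0 : ℤ) ≤ q.num := Rat.num_nonneg.mpr (by linarith)
    obtain ⟨a, ha⟩ := Int.eq_ofNat_of_zero_le hnum
    have hqa : (a : ℚ) = q * q.den := by
      have h1 := Rat.mul_den_eq_num q
      rw [h1, ha]
      norm_cast
    have hlt : q.den < a := by
      have : (q.den : ℚ) < a := by rw [hqa]; nlinarith
      exact_mod_cast this
    obtain ⟨V, G, h1, h2, h3, h4⟩ := main_case a q.den q.pos hlt
    refine ⟨V, G, h1, h2, ?_⟩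
    rw [h3, h4]
    push_cast
    rw [hqa]
    ring
end

section
/- For every n ≥ 1, ⌈2n/3⌉ zombies have a winning strategy on the n-dimensional hypercube Q_n; that is, z(Q_n) ≤ ⌈2n/3⌉. -/
open SimpleGraph

/-! ### Proof of the hypercube bound -/

section HypercubeProof

/-- Flip coordinate `j` of `x`. -/
def hcFlip {n : ℕ} (x : Fin n → Bool) (j : Fin n) : Fin n → Bool :=
  Function.update x j (!x j)

theorem hcFlip_self {n : ℕ} (x : Fin n → Bool) (j : Fin n) : hcFlip x j j = !x j := by
  simp [hcFlip]

theorem hcFlip_of_ne {n : ℕ} (x : Fin n → Bool) {i j : Fin n} (h : i ≠ j) :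
    hcFlip x j i = x i := by
  simp [hcFlip, h]

theorem hcFlip_hcFlip {n : ℕ} (x : Fin n → Bool) (j : Fin n) : hcFlip (hcFlip x j) j = x := by
  ext i
  by_cases h : i = j
  · subst h; simp [hcFlip_self]
  · simp [hcFlip_of_ne _ h]

theorem hc_adj_iff {n : ℕ} (x y : Fin n → Bool) :
    (hypercube n).Adj x y ↔ ∃ j, y = hcFlip x j := by
  unfold hypercube
  rw [SimpleGraph.fromRel_adj]
  constructor
  · rintro ⟨_, ⟨j, h1, h2⟩ | ⟨j, h1, h2⟩⟩ <;>
    · refine ⟨j, ?_⟩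
      ext i
      by_cases h : i = j
      · subst h
        rw [hcFlip_self]
        revert h1
        cases x i <;> cases y i <;> simp
      · rw [hcFlip_of_ne _ h, h2 i h]
  · rintro ⟨j, rfl⟩
    have hj : x j ≠ hcFlip x j j := by rw [hcFlip_self]; cases x j <;> simp
    exact ⟨fun h => hj (congrFun h j), Or.inl ⟨j, hj, fun i hi => (hcFlip_of_ne x hi).symm⟩⟩

theorem hd_flip_eq {n : ℕ} (x r : Fin n → Bool) (j : Fin n) (h : x j = r j) :
    hammingDist x (hcFlip r j) = hammingDist x r + 1 := by
  unfold hammingDist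
  have : (Finset.univ.filter fun i => x i ≠ hcFlip r j i)
      = insert j (Finset.univ.filter fun i => x i ≠ r i) := by
    ext i
    by_cases hi : i = j
    · subst hi
      simp [hcFlip_self, h]
    · simp [hcFlip_of_ne _ hi, hi]
  rw [this, Finset.card_insert_of_notMem]
  simp [h]

theorem hd_flip_ne {n : ℕ} (x r : Fin n → Bool) (j : Fin n) (h : x j ≠ r j) :
    hammingDist x (hcFlip r j) + 1 = hammingDist x r := by
  have := hd_flip_eq x (hcFlip r j) j (by
    rw [hcFlip_self]; revert h; cases x j <;> cases r j <;> simp)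
  rw [hcFlip_hcFlip] at this
  exact this.symm

theorem hd_flip_left {n : ℕ} (x r : Fin n → Bool) (j : Fin n) (h : x j ≠ r j) :
    hammingDist (hcFlip x j) r + 1 = hammingDist x r := by
  rw [hammingDist_comm _ r, hammingDist_comm x r]
  exact hd_flip_ne r x j h.symm

theorem hd_le_walk {n : ℕ} {x y : Fin n → Bool} (w : (hypercube n).Walk x y) :
    hammingDist x y ≤ w.length := by
  induction w with
  | nil => simp
  | @cons u v w h p ih =>
    obtain ⟨j, rfl⟩ := (hc_adj_iff _ _).1 h
    rw [SimpleGraph.Walk.length_cons]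
    have h1 := hammingDist_triangle u (hcFlip u j) w
    have h2 := hd_flip_eq u u j rfl
    rw [hammingDist_self] at h2
    omega

theorem exists_walk {n : ℕ} (m : ℕ) : ∀ x y : Fin n → Bool, hammingDist x y = m →
    ∃ w : (hypercube n).Walk x y, w.length = m := by
  induction m with
  | zero =>
    intro x y h
    rw [hammingDist_eq_zero] at h
    subst h
    exact ⟨SimpleGraph.Walk.nil, rfl⟩
  | succ m ih =>
    intro x y h
    have hne : x ≠ y := by
      intro e
      rw [e, hammingDist_self] at h
      omega
    obtain ⟨j, hj⟩ := Function.ne_iff.1 hne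
    have := hd_flip_left x y j hj
    obtain ⟨w, hw⟩ := ih (hcFlip x j) y (by omega)
    exact ⟨SimpleGraph.Walk.cons ((hc_adj_iff _ _).2 ⟨j, rfl⟩) w, by simp [hw]⟩

theorem hc_dist {n : ℕ} (x y : Fin n → Bool) : (hypercube n).dist x y = hammingDist x y := by
  obtain ⟨w, hw⟩ := exists_walk _ x y rfl
  apply le_antisymm
  · rw [← hw]
    exact SimpleGraph.dist_le w
  · obtain ⟨walk, hwalk⟩ := SimpleGraph.Reachable.exists_walk_length_eq_dist ⟨w⟩
    rw [← hwalk]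
    exact hd_le_walk walk

/-- The zombie in charge of coordinate `j` when the common parity is `p`: zombies at even
distance get one coordinate, zombies at odd distance get two. -/
def hcOwner (p j : ℕ) : ℕ :=
  if j % 3 = 0 then 2 * (j / 3) else if j % 3 = 2 then 2 * (j / 3) + 1
  else if p = 0 then 2 * (j / 3) + 1 else 2 * (j / 3)

theorem hcOwner_lt (n p : ℕ) (j : Fin n) : hcOwner p j < (2 * n + 2) / 3 := by
  have := j.2
  unfold hcOwner
  split_ifs <;> omega

/-- A zombie not yet adjacent to the survivor has a coordinate to fix it is not in charge of. -/
theorem exists_not_owned {n : ℕ} (p i : ℕ) (a s : Fin n → Bool)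
    (hp : (hammingDist a s + i) % 2 = p) (h2 : 2 ≤ hammingDist a s) :
    ∃ j, a j ≠ s j ∧ hcOwner p j ≠ i := by
  by_contra! hcon
  have key : ∀ S : Finset ℕ, (∀ j : Fin n, hcOwner p j = i → (j : ℕ) ∈ S) →
      hammingDist a s ≤ S.card := by
    intro S hS
    unfold hammingDist
    apply Finset.card_le_card_of_injOn (fun j : Fin n => (j : ℕ))
    · intro j hj
      simp at hj
      exact hS j (hcon j hj)
    · intro j _ j' _ h
      exact Fin.ext h
  rcases Nat.even_or_odd (hammingDist a s) with he | ho
  · rw [Nat.even_iff] at he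
    have := key {3 * (i / 2) + 2 * (i % 2)} (by
      intro j hj
      rw [Finset.mem_singleton]
      unfold hcOwner at hj
      split_ifs at hj <;> omega)
    simp at this
    omega
  · rw [Nat.odd_iff] at ho
    have := (key {3 * (i / 2) + (i % 2), 3 * (i / 2) + (i % 2) + 1} (by
      intro j hj
      rw [Finset.mem_insert, Finset.mem_singleton]
      unfold hcOwner at hj
      split_ifs at hj <;> omega)).trans Finset.card_le_two
    omega

open Classical in
/-- The move of zombie `i` at `a` when the survivor is at `s`. -/
noncomputable def hcMove {n : ℕ} (p i : ℕ) (a s : Fin n → Bool) : Fin n → Bool :=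
  if h : ∃ j, a j ≠ s j ∧ hcOwner p j ≠ i then hcFlip a h.choose
  else if h : ∃ j, a j ≠ s j then hcFlip a h.choose else a

theorem hcMove_spec {n : ℕ} (p i : ℕ) (a s : Fin n → Bool) (h : a ≠ s) :
    ∃ j, a j ≠ s j ∧ hcMove p i a s = hcFlip a j := by
  unfold hcMove
  split_ifs with h1 h2
  · exact ⟨_, h1.choose_spec.1, rfl⟩
  · exact ⟨_, h2.choose_spec, rfl⟩
  · exact absurd (Function.ne_iff.1 h) h2

theorem hcMove_spec' {n : ℕ} (p i : ℕ) (a s : Fin n → Bool)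
    (h : ∃ j, a j ≠ s j ∧ hcOwner p j ≠ i) :
    ∃ j, a j ≠ s j ∧ hcOwner p j ≠ i ∧ hcMove p i a s = hcFlip a j := by
  unfold hcMove
  rw [dif_pos h]
  exact ⟨_, h.choose_spec.1, h.choose_spec.2, rfl⟩

/-- The common parity of a position. -/
def hcPar {n k : ℕ} (hk : 0 < k) (c : Fin k → Fin n → Bool) (s : Fin n → Bool) : ℕ :=
  hammingDist (c ⟨0, hk⟩) s % 2

/-- The zombie strategy: play according to the last position. -/
noncomputable def hcStrat {n k : ℕ} (hk : 0 < k) (H : GameHist (Fin n → Bool) k) :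
    Fin k → Fin n → Bool :=
  match H.getLast? with
  | none => fun _ _ => false
  | some (c, s) => fun i => hcMove (hcPar hk c s) i (c i) s

theorem hcStrat_hist {n k : ℕ} (hk : 0 < k) (c : ℕ → Fin k → Fin n → Bool)
    (r : ℕ → Fin n → Bool) (t : ℕ) (i : Fin k) :
    hcStrat hk (histUpTo c r (t + 1)) i = hcMove (hcPar hk (c t) (r t)) i (c t i) (r t) := by
  have : (histUpTo c r (t + 1)).getLast? = some (c t, r t) := by
    simp [histUpTo, List.range_succ]
  unfold hcStrat
  rw [this]

/-- Total distance of the zombies to the survivor. -/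
def hcTot {n k : ℕ} (c : Fin k → Fin n → Bool) (s : Fin n → Bool) : ℕ :=
  ∑ i, hammingDist (c i) s

/-- The number of coordinates not covered by the zombie in charge. -/
def hcUnc {n : ℕ} (p : ℕ) (c : Fin ((2 * n + 2) / 3) → Fin n → Bool) (s : Fin n → Bool) : ℕ :=
  (Finset.univ.filter fun j : Fin n => c ⟨hcOwner p j, hcOwner_lt n p j⟩ j = s j).card

theorem hcUnc_le {n : ℕ} (p : ℕ) (c : Fin ((2 * n + 2) / 3) → Fin n → Bool)
    (s : Fin n → Bool) : hcUnc p c s ≤ n := by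
  unfold hcUnc
  exact (Finset.card_le_univ _).trans (by simp)

/-- One round without capture makes progress. -/
theorem hc_round {n : ℕ} (hk : 0 < (2 * n + 2) / 3)
    (c c' : Fin ((2 * n + 2) / 3) → Fin n → Bool) (s s' : Fin n → Bool)
    (hpar : ∀ i, (hammingDist (c i) s + i) % 2 = hcPar hk c s)
    (hc' : ∀ i, c' i = hcMove (hcPar hk c s) i (c i) s)
    (hno : ∀ i, c i ≠ s) (hno' : ∀ i, c' i ≠ s)
    (hs : s' = s ∨ (hypercube n).Adj s s') :
    (∀ i, (hammingDist (c' i) s' + i) % 2 = hcPar hk c' s') ∧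
    (hcTot c' s' < hcTot c s ∨
      (hcTot c' s' = hcTot c s ∧
        hcUnc (hcPar hk c' s') c' s' < hcUnc (hcPar hk c s) c s)) := by
  have h2 : ∀ i, 2 ≤ hammingDist (c i) s := by
    intro i
    obtain ⟨j, hj, e⟩ := hcMove_spec (hcPar hk c s) i (c i) s (hno i)
    have h1 := hd_flip_left (c i) s j hj
    have h3 := hammingDist_pos.2 (hno' i)
    rw [hc' i, e] at h3
    omega
  have hmv : ∀ i : Fin ((2 * n + 2) / 3), ∃ j, c i j ≠ s j ∧ hcOwner (hcPar hk c s) j ≠ i ∧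
      c' i = hcFlip (c i) j := by
    intro i
    rw [hc' i]
    exact hcMove_spec' _ _ _ _ (exists_not_owned _ _ _ _ (hpar i) (h2 i))
  have hd1 : ∀ i, hammingDist (c' i) s + 1 = hammingDist (c i) s := by
    intro i
    obtain ⟨j, hj, _, e⟩ := hmv i
    rw [e]
    exact hd_flip_left _ _ _ hj
  have hpar0 := hpar ⟨0, hk⟩
  have hd0 := hd1 ⟨0, hk⟩
  rcases hs with rfl | hs
  · constructor
    · intro i
      have := hpar i
      have := hd1 i
      simp only [hcPar] at *
      omega
    · left
      unfold hcTot
      apply Finset.sum_lt_sum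
      · intro i _
        have := hd1 i
        omega
      · exact ⟨⟨0, hk⟩, Finset.mem_univ _, by omega⟩
  · obtain ⟨j, rfl⟩ := (hc_adj_iff _ _).1 hs
    have hcase : ∀ i, (c' i j = s j ∧ hammingDist (c' i) (hcFlip s j) = hammingDist (c i) s) ∨
        (hammingDist (c' i) (hcFlip s j) + 2 = hammingDist (c i) s) := by
      intro i
      have := hd1 i
      by_cases h : c' i j = s j
      · left
        exact ⟨h, by rw [hd_flip_eq _ _ _ h, this]⟩
      · right
        have := hd_flip_ne _ _ _ h
        omega
    have hle : ∀ i, hammingDist (c' i) (hcFlip s j) ≤ hammingDist (c i) s := by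
      intro i
      rcases hcase i with h | h <;> omega
    have hc0 := hcase ⟨0, hk⟩
    constructor
    · intro i
      have := hpar i
      have := hcase i
      simp only [hcPar] at *
      omega
    · by_cases hall : ∀ i, c' i j = s j ∧ hammingDist (c' i) (hcFlip s j) = hammingDist (c i) s
      · right
        refine ⟨by unfold hcTot; exact Finset.sum_congr rfl fun i _ => (hall i).2, ?_⟩
        have hpe : hcPar hk c' (hcFlip s j) = hcPar hk c s := by
          unfold hcPar
          rw [(hall _).2]
        rw [hpe]
        generalize hcPar hk c s = p at *
        have hkeep : ∀ x : Fin n, c' ⟨hcOwner p x, hcOwner_lt n p x⟩ x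
            = c ⟨hcOwner p x, hcOwner_lt n p x⟩ x := by
          intro x
          obtain ⟨y, _, hy, e⟩ := hmv ⟨hcOwner p x, hcOwner_lt n p x⟩
          rw [e, hcFlip_of_ne]
          rintro rfl
          exact hy rfl
        unfold hcUnc
        apply Finset.card_lt_card
        rw [Finset.ssubset_iff_of_subset]
        · refine ⟨j, ?_, ?_⟩
          · simp only [Finset.mem_filter, Finset.mem_univ, true_and]
            rw [← hkeep]
            exact (hall _).1
          · simp only [Finset.mem_filter, Finset.mem_univ, true_and]
            rw [(hall _).1, hcFlip_self]
            cases s j <;> simp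
        · intro x
          simp only [Finset.mem_filter, Finset.mem_univ, true_and]
          intro hx
          have hxj : x ≠ j := by
            rintro rfl
            rw [(hall _).1, hcFlip_self] at hx
            revert hx
            cases s x <;> simp
          rw [hcFlip_of_ne _ hxj, hkeep] at hx
          exact hx
      · left
        obtain ⟨i, hi⟩ := not_forall.1 hall
        unfold hcTot
        apply Finset.sum_lt_sum
        · intro i _
          exact hle i
        · refine ⟨i, Finset.mem_univ _, ?_⟩
          rcases hcase i with h | h
          · exact absurd h hi
          · omega

/-- Starting positions: even zombies at the origin, odd zombies next to it. -/
def hcStart {n : ℕ} (hn : 1 ≤ n) (i : Fin ((2 * n + 2) / 3)) : Fin n → Bool :=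
  if (i : ℕ) % 2 = 0 then fun _ => false else hcFlip (fun _ => false) ⟨0, hn⟩

theorem hcStart_par {n : ℕ} (hn : 1 ≤ n) (hk : 0 < (2 * n + 2) / 3) (s : Fin n → Bool)
    (i : Fin ((2 * n + 2) / 3)) :
    (hammingDist (hcStart hn i) s + i) % 2 = hcPar hk (hcStart hn) s := by
  unfold hcPar hcStart
  simp only [Nat.zero_mod, if_true]
  split_ifs with h
  · omega
  · rw [hammingDist_comm _ s, hammingDist_comm _ s]
    by_cases hj : s ⟨0, hn⟩ = (fun _ => false : Fin n → Bool) ⟨0, hn⟩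
    · have := hd_flip_eq s (fun _ => false) ⟨0, hn⟩ hj
      omega
    · have := hd_flip_ne s (fun _ => false) ⟨0, hn⟩ hj
      omega

theorem hc_win (n : ℕ) (hn : 1 ≤ n) : ZombiesWinWith (hypercube n) ((2 * n + 2) / 3) := by
  have hk : 0 < (2 * n + 2) / 3 := by omega
  refine ⟨hcStart hn, fun spos => ⟨hcStrat hk, ?_⟩⟩
  intro c r hc0 _ hf hr
  have hmove : ∀ t i, c (t + 1) i = hcMove (hcPar hk (c t) (r t)) i (c t i) (r t) := by
    intro t i
    rw [hf t, hcStrat_hist]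
  have hlegal : ∀ t, (∀ i, c t i ≠ r t) → ZombieStepLegal (hypercube n) c r t := by
    intro t ht i
    obtain ⟨j, hj, e⟩ := hcMove_spec (hcPar hk (c t) (r t)) i (c t i) (r t) (ht i)
    rw [hmove t i, e, hc_dist, hc_dist]
    have := hd_flip_left (c t i) (r t) j hj
    exact ⟨(hc_adj_iff _ _).2 ⟨j, rfl⟩, by omega⟩
  have hcap : ∃ t, (∃ i, c t i = r t) ∨ (∃ i, c (t + 1) i = r t) := by
    by_contra! hno
    have hpar : ∀ t, ∀ i, (hammingDist (c t i) (r t) + i) % 2 = hcPar hk (c t) (r t) := by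
      intro t
      induction t with
      | zero =>
        rw [hc0]
        exact hcStart_par hn hk _
      | succ t ih =>
        exact (hc_round hk _ _ _ _ ih (hmove t) (hno t).1 (hno t).2 (hr t)).1
    have hdec : ∀ t, hcTot (c (t + 1)) (r (t + 1)) * (n + 1)
          + hcUnc (hcPar hk (c (t + 1)) (r (t + 1))) (c (t + 1)) (r (t + 1))
        < hcTot (c t) (r t) * (n + 1) + hcUnc (hcPar hk (c t) (r t)) (c t) (r t) := by
      intro t
      have hb := hcUnc_le (hcPar hk (c (t + 1)) (r (t + 1))) (c (t + 1)) (r (t + 1))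
      rcases (hc_round hk _ _ _ _ (hpar t) (hmove t) (hno t).1 (hno t).2 (hr t)).2 with h | ⟨h, h'⟩
      · have := Nat.mul_le_mul_right (n + 1) (Nat.succ_le_of_lt h)
        rw [Nat.succ_mul] at this
        omega
      · rw [h]
        omega
    have hbound : ∀ t, hcTot (c t) (r t) * (n + 1) + hcUnc (hcPar hk (c t) (r t)) (c t) (r t) + t
        ≤ hcTot (c 0) (r 0) * (n + 1) + hcUnc (hcPar hk (c 0) (r 0)) (c 0) (r 0) := by
      intro t
      induction t with
      | zero => simp
      | succ t ih =>
        have := hdec t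
        omega
    have := hbound (hcTot (c 0) (r 0) * (n + 1) + hcUnc (hcPar hk (c 0) (r 0)) (c 0) (r 0) + 1)
    omega
  classical
  have hmin : ∀ m < Nat.find hcap, ZombieStepLegal (hypercube n) c r m := by
    intro m hm
    have := Nat.find_min hcap hm
    push Not at this
    exact hlegal m this.1
  refine ⟨Nat.find hcap, ?_⟩
  by_cases h : ∃ i, c (Nat.find hcap) i = r (Nat.find hcap)
  · exact Or.inl ⟨h, hmin⟩
  · right
    refine ⟨(Nat.find_spec hcap).resolve_left h, ?_⟩
    intro m hm
    rcases Nat.lt_or_eq_of_le hm with h' | h'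
    · exact hmin m h'
    · rw [h']
      exact hlegal _ (not_exists.1 h)

end HypercubeProof

/-- For every `n ≥ 1`, `⌈2n/3⌉` zombies have a winning strategy on the `n`-dimensional
hypercube `Q_n`; that is, `z(Q_n) ≤ ⌈2n/3⌉`. -/
theorem zombies_win_hypercube (n : ℕ) (hn : 1 ≤ n) :
    ZombiesWinWith (hypercube n) ((2 * n + 2) / 3) ∧
      zombieNumber (hypercube n) ≤ (2 * n + 2) / 3 := by
  exact ⟨hc_win n hn, Nat.sInf_le (hc_win n hn)⟩
end

section
/- For every n ≥ 1, the zombie number of the n-dimensional hypercube is z(Q_n) = ⌈2n/3⌉. -/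
open SimpleGraph

namespace HZ

/-- Coordinates where two vertices differ. -/
def D {n : ℕ} (z s : Fin n → Bool) : Finset (Fin n) := Finset.univ.filter fun i => z i ≠ s i

/-- Flip one coordinate. -/
def flip {n : ℕ} (s : Fin n → Bool) (j : Fin n) : Fin n → Bool := Function.update s j (!s j)

lemma mem_D {n : ℕ} {z s : Fin n → Bool} {i : Fin n} : i ∈ D z s ↔ z i ≠ s i := by simp [D]

lemma D_comm {n : ℕ} (z s : Fin n → Bool) : D z s = D s z := by
  ext i; simp [mem_D, ne_comm]

lemma D_empty {n : ℕ} {z s : Fin n → Bool} : D z s = ∅ ↔ z = s := by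
  constructor
  · intro h
    funext i
    by_contra hi
    have : i ∈ D z s := mem_D.2 hi
    simp [h] at this
  · rintro rfl
    simp [D]

lemma card_pos {n : ℕ} {z s : Fin n → Bool} : 0 < (D z s).card ↔ z ≠ s := by
  rw [Finset.card_pos, Finset.nonempty_iff_ne_empty, ne_eq, D_empty]

lemma D_flip_mem {n : ℕ} {z s : Fin n → Bool} {j : Fin n} (h : j ∈ D z s) :
    D z (flip s j) = (D z s).erase j := by
  ext i
  rw [mem_D] at h
  simp only [Finset.mem_erase, mem_D, flip, Function.update_apply]
  by_cases hi : i = j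
  · subst hi
    simp only [if_true, ne_eq, not_true, false_and, iff_false, not_not]
    revert h; cases z i <;> cases s i <;> simp
  · simp [hi]

lemma D_flip_not_mem {n : ℕ} {z s : Fin n → Bool} {j : Fin n} (h : j ∉ D z s) :
    D z (flip s j) = insert j (D z s) := by
  ext i
  rw [mem_D] at h
  simp only [Finset.mem_insert, mem_D, flip, Function.update_apply]
  by_cases hi : i = j
  · subst hi
    simp only [if_true, true_or, iff_true]
    revert h; cases z i <;> cases s i <;> simp
  · simp [hi]

lemma card_flip {n : ℕ} (z s : Fin n → Bool) (j : Fin n) :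
    (j ∈ D z s ∧ (D z (flip s j)).card + 1 = (D z s).card) ∨
    (j ∉ D z s ∧ (D z (flip s j)).card = (D z s).card + 1) := by
  by_cases h : j ∈ D z s
  · left
    refine ⟨h, ?_⟩
    rw [D_flip_mem h, Finset.card_erase_add_one h]
  · right
    refine ⟨h, ?_⟩
    rw [D_flip_not_mem h, Finset.card_insert_of_notMem h]

lemma adj_iff {n : ℕ} {x y : Fin n → Bool} : (hypercube n).Adj x y ↔ ∃ j, y = flip x j := by
  have key : ∀ x y : Fin n → Bool, (∃ i, x i ≠ y i ∧ ∀ j, j ≠ i → x j = y j) ↔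
      ∃ j, y = flip x j := by
    intro x y
    constructor
    · rintro ⟨i, h1, h2⟩
      refine ⟨i, ?_⟩
      funext j
      simp only [flip, Function.update_apply]
      by_cases hj : j = i
      · subst hj
        revert h1; cases x j <;> cases y j <;> simp
      · simp [hj, h2 j hj]
    · rintro ⟨j, rfl⟩
      refine ⟨j, ?_, ?_⟩
      · simp [flip]
      · intro i hi
        simp [flip, hi]
  unfold hypercube
  rw [SimpleGraph.fromRel_adj, key, key]
  constructor
  · rintro ⟨_, h | ⟨j, rfl⟩⟩
    · exact h
    · refine ⟨j, ?_⟩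
      funext i
      by_cases hi : i = j
      · subst hi; simp [flip]
      · simp [flip, hi]
  · rintro ⟨j, rfl⟩
    refine ⟨?_, Or.inl ⟨j, rfl⟩⟩
    intro h
    have := congrFun h j
    simp [flip] at this

lemma exists_walk {n : ℕ} (d : ℕ) : ∀ x y : Fin n → Bool, (D x y).card = d →
    ∃ p : (hypercube n).Walk x y, p.length = d := by
  induction d with
  | zero =>
    intro x y h
    have := D_empty.1 (Finset.card_eq_zero.1 h)
    subst this
    exact ⟨.nil, rfl⟩
  | succ d ih =>
    intro x y h
    obtain ⟨j, hj⟩ : (D x y).Nonempty := Finset.card_pos.1 (by omega)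
    have h1 : (D (flip x j) y).card = d := by
      rw [D_comm] at hj h ⊢
      rw [D_flip_mem hj]
      rw [Finset.card_erase_of_mem hj]; omega
    obtain ⟨p, hp⟩ := ih _ _ h1
    exact ⟨.cons (adj_iff.2 ⟨j, rfl⟩) p, by simp [hp]⟩

lemma walk_le {n : ℕ} {x y : Fin n → Bool} (p : (hypercube n).Walk x y) :
    (D x y).card ≤ p.length := by
  induction p with
  | nil => simp [D_empty.2 rfl]
  | @cons u v w h p ih =>
    obtain ⟨j, rfl⟩ := adj_iff.1 h
    have := card_flip w u j
    rw [D_comm w, D_comm w] at this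
    simp only [SimpleGraph.Walk.length_cons]
    omega

lemma dist_eq {n : ℕ} (x y : Fin n → Bool) : (hypercube n).dist x y = (D x y).card := by
  obtain ⟨p, hp⟩ := exists_walk _ x y rfl
  apply le_antisymm
  · rw [← hp]; exact SimpleGraph.dist_le p
  · obtain ⟨q, hq⟩ := (SimpleGraph.Walk.reachable p).exists_walk_length_eq_dist
    rw [← hq]; exact walk_le q

lemma card_flip_left {n : ℕ} (z s : Fin n → Bool) (j : Fin n) :
    (j ∈ D z s ∧ (D (flip z j) s).card + 1 = (D z s).card) ∨
    (j ∉ D z s ∧ (D (flip z j) s).card = (D z s).card + 1) := by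
  have := card_flip s z j
  rwa [D_comm s, D_comm s] at this

/-- A legal zombie move decreases the distance by exactly one. -/
lemma legal_step {n : ℕ} {z z' s : Fin n → Bool} (h : (hypercube n).Adj z z')
    (hd : (hypercube n).dist z' s < (hypercube n).dist z s) :
    (D z' s).card + 1 = (D z s).card := by
  obtain ⟨j, rfl⟩ := adj_iff.1 h
  rw [dist_eq, dist_eq] at hd
  have := card_flip_left z s j
  omega

/-! ### Lower bound -/

lemma sq_lt (n : ℕ) (hn : 1 ≤ n) : n ^ 2 < 3 * 2 ^ (n - 1) := by
  obtain ⟨m, rfl⟩ : ∃ m, n = m + 1 := ⟨n - 1, by omega⟩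
  clear hn
  rw [Nat.add_sub_cancel]
  induction m with
  | zero => norm_num
  | succ m ih =>
    rcases Nat.lt_or_ge m 2 with h | h
    · interval_cases m <;> norm_num
    · rw [pow_succ 2 m]
      nlinarith

/-- parity of a vertex -/
def par {n : ℕ} (s : Fin n → Bool) : ℕ := (D (fun _ => false) s).card % 2

lemma par_flip {n : ℕ} (s : Fin n → Bool) (j : Fin n) : par (flip s j) = 1 - par s := by
  have := card_flip (fun _ => false) s j
  unfold par
  omega

lemma flip_flip {n : ℕ} (s : Fin n → Bool) (j : Fin n) : flip (flip s j) j = s := by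
  funext i
  by_cases hi : i = j
  · subst hi; simp [flip]
  · simp [flip, hi]

lemma par_D {n : ℕ} (d : ℕ) : ∀ z s : Fin n → Bool, (D z s).card = d →
    d % 2 = (par z + par s) % 2 := by
  induction d with
  | zero =>
    intro z s h
    have := D_empty.1 (Finset.card_eq_zero.1 h)
    subst this
    omega
  | succ d ih =>
    intro z s h
    obtain ⟨j, hj⟩ : (D z s).Nonempty := Finset.card_pos.1 (by omega)
    have h2 := ih z (flip s j) (by rw [D_flip_mem hj, Finset.card_erase_of_mem hj]; omega)
    rw [par_flip] at h2
    have h3 : par s < 2 := Nat.mod_lt _ (by norm_num)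
    omega

lemma card_par {n : ℕ} (hn : 1 ≤ n) (p : ℕ) (hp : p < 2) :
    (Finset.univ.filter fun s : Fin n → Bool => par s = p).card = 2 ^ (n - 1) := by
  have h1 : (Finset.univ.filter fun s : Fin n → Bool => par s = p).card =
      (Finset.univ.filter fun s : Fin n → Bool => ¬ par s = p).card := by
    have hlt : ∀ s : Fin n → Bool, par s < 2 := fun s => Nat.mod_lt _ (by norm_num)
    apply Finset.card_nbij' (fun s => flip s ⟨0, hn⟩) (fun s => flip s ⟨0, hn⟩)
    · intro s hs
      have := hlt s
      simp only [Finset.coe_filter, Finset.mem_univ, true_and, Set.mem_ofPred_eq, par_flip] at hs ⊢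
      omega
    · intro s hs
      have := hlt s
      simp only [Finset.coe_filter, Finset.mem_univ, true_and, Set.mem_ofPred_eq, par_flip] at hs ⊢
      omega
    · intro s _; exact flip_flip _ _
    · intro s _; exact flip_flip _ _
  have h2 := Finset.card_filter_add_card_filter_not (s := (Finset.univ : Finset (Fin n → Bool)))
    (fun s => par s = p)
  have h3 : (Finset.univ : Finset (Fin n → Bool)).card = 2 ^ n := by simp
  have h4 : 2 ^ n = 2 * 2 ^ (n - 1) := by
    rw [← pow_succ']; congr 1; omega
  omega

lemma exists_start {n k : ℕ} (hn : 1 ≤ n) (hk : 3 * k < 2 * n) (z : Fin k → Fin n → Bool) :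
    ∃ (A : Finset (Fin k)) (s : Fin n → Bool), 2 * A.card ≤ k ∧
      (∀ i ∈ A, (D (z i) s).card % 2 = 1 ∧ 3 ≤ (D (z i) s).card) ∧
      (∀ i ∉ A, (D (z i) s).card % 2 = 0 ∧ 2 ≤ (D (z i) s).card) := by
  have hlt : ∀ s : Fin n → Bool, par s < 2 := fun s => Nat.mod_lt _ (by norm_num)
  obtain ⟨p, hp, hA⟩ : ∃ p < 2, 2 * (Finset.univ.filter fun i => par (z i) ≠ p).card ≤ k := by
    have h2 := Finset.card_filter_add_card_filter_not (s := (Finset.univ : Finset (Fin k)))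
      (fun i => par (z i) = 0)
    have h3 : (Finset.univ.filter fun i => ¬ par (z i) = 1).card =
        (Finset.univ.filter fun i => par (z i) = 0).card := by
      congr 1
      apply Finset.filter_congr
      intro i _
      have := hlt (z i)
      omega
    rw [Finset.card_univ, Fintype.card_fin] at h2
    by_cases h : 2 * (Finset.univ.filter fun i => ¬ par (z i) = 0).card ≤ k
    · exact ⟨0, by norm_num, h⟩
    · refine ⟨1, by norm_num, ?_⟩
      simp only [ne_eq]
      omega
  set A := Finset.univ.filter fun i => par (z i) ≠ p with hAdef
  let F : Finset (Fin n → Bool) := Aᶜ.biUnion (fun i => {z i}) ∪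
    A.biUnion (fun i => Finset.univ.image fun j => flip (z i) j)
  have hF : F.card ≤ (k - A.card) + A.card * n := by
    refine (Finset.card_union_le _ _).trans (add_le_add ?_ ?_)
    · refine (Finset.card_biUnion_le_card_mul _ _ 1 (by simp)).trans ?_
      rw [Finset.card_compl, Fintype.card_fin, mul_one]
    · refine Finset.card_biUnion_le_card_mul _ _ n ?_
      intro i _
      exact Finset.card_image_le.trans (by simp)
  have hlt2 : F.card < (Finset.univ.filter fun s : Fin n → Bool => par s = p).card := by
    rw [card_par hn p hp]
    have h1 := sq_lt n hn
    have h2 : 3 * A.card + 1 ≤ n := by omega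
    obtain ⟨m, rfl⟩ : ∃ m, n = m + 1 := ⟨n - 1, by omega⟩
    have h3 : k - A.card + A.card * (m + 1) = k + A.card * m := by
      rw [mul_add, mul_one]; omega
    rw [h3] at hF
    nlinarith
  obtain ⟨s, hs, hsF⟩ := Finset.exists_mem_notMem_of_card_lt_card hlt2
  simp only [Finset.mem_filter, Finset.mem_univ, true_and] at hs
  refine ⟨A, s, hA, ?_, ?_⟩
  · intro i hi
    have h1 := par_D _ (z i) s rfl
    have h2 : par (z i) ≠ p := by simpa [hAdef] using hi
    have h3 := hlt (z i)
    have h4 : (D (z i) s).card % 2 = 1 := by omega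
    refine ⟨h4, ?_⟩
    have h5 : (D (z i) s).card ≠ 1 := by
      intro h
      obtain ⟨j, hj⟩ := Finset.card_eq_one.1 h
      have h6 : j ∈ D (z i) s := by simp [hj]
      have h7 := card_flip_left (z i) s j
      simp only [h6, true_and, not_true, false_and, or_false] at h7
      have h8 : D (flip (z i) j) s = ∅ := Finset.card_eq_zero.1 (by omega)
      apply hsF
      simp only [F, Finset.mem_union, Finset.mem_biUnion, Finset.mem_image]
      exact Or.inr ⟨i, hi, j, Finset.mem_univ _, D_empty.1 h8⟩
    omega
  · intro i hi
    have h1 := par_D _ (z i) s rfl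
    have h2 : par (z i) = p := by simpa [hAdef] using hi
    have h4 : (D (z i) s).card % 2 = 0 := by omega
    refine ⟨h4, ?_⟩
    have h5 : (D (z i) s).card ≠ 0 := by
      intro h
      have h6 := D_empty.1 (Finset.card_eq_zero.1 h)
      apply hsF
      simp only [F, Finset.mem_union, Finset.mem_biUnion, Finset.mem_compl, Finset.mem_singleton]
      exact Or.inl ⟨i, hi, h6.symm⟩
    omega

/-- The survivor's invariant. -/
def Inv {n k : ℕ} (A : Finset (Fin k)) (z : Fin k → Fin n → Bool) (s : Fin n → Bool) : Prop :=
  (∀ i ∈ A, (D (z i) s).card % 2 = 1 ∧ 3 ≤ (D (z i) s).card) ∧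
      (∀ i ∉ A, (D (z i) s).card % 2 = 0 ∧ 2 ≤ (D (z i) s).card)

lemma survivor_step {n k : ℕ} (hk : 3 * k < 2 * n) (A : Finset (Fin k)) (hA : 2 * A.card ≤ k)
    (z z' : Fin k → Fin n → Bool) (s : Fin n → Bool) (h : Inv A z s)
    (hz : ∀ i, (D (z' i) s).card + 1 = (D (z i) s).card) :
    ∃ j, Inv A z' (flip s j) := by
  let B : Finset (Fin n) := (Finset.univ.filter fun i : Fin k =>
    (D (z' i) s).card ≤ if i ∈ A then 2 else 1).biUnion fun i => D (z' i) s
  have hB : B.card < (Finset.univ : Finset (Fin n)).card := by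
    have h1 : B.card ≤ ∑ i : Fin k, (1 + if i ∈ A then 1 else 0) := by
      refine Finset.card_biUnion_le.trans ?_
      rw [Finset.sum_filter]
      apply Finset.sum_le_sum
      intro i _
      split_ifs <;> omega
    have h2 : ∑ i : Fin k, (1 + if i ∈ A then 1 else 0) = k + A.card := by
      rw [Finset.sum_add_distrib]; simp
    rw [Finset.card_univ, Fintype.card_fin]
    omega
  obtain ⟨j, -, hj⟩ := Finset.exists_mem_notMem_of_card_lt_card hB
  have hj' : ∀ i, (D (z' i) s).card ≤ (if i ∈ A then 2 else 1) → j ∉ D (z' i) s := by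
    intro i hi hji
    apply hj
    simp only [B, Finset.mem_biUnion, Finset.mem_filter, Finset.mem_univ, true_and]
    exact ⟨i, hi, hji⟩
  refine ⟨j, ?_, ?_⟩
  · intro i hi
    have h1 := h.1 i hi
    have h2 := hz i
    have h3 := hj' i
    rw [if_pos hi] at h3
    rcases card_flip (z' i) s j with ⟨h4, h5⟩ | ⟨h4, h5⟩
    · have : ¬ (D (z' i) s).card ≤ 2 := fun h => h3 h h4
      omega
    · omega
  · intro i hi
    have h1 := h.2 i hi
    have h2 := hz i
    have h3 := hj' i
    rw [if_neg hi] at h3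
    rcases card_flip (z' i) s j with ⟨h4, h5⟩ | ⟨h4, h5⟩
    · have : ¬ (D (z' i) s).card ≤ 1 := fun h => h3 h h4
      omega
    · omega

open Classical in
/-- The survivor's response. -/
noncomputable def resp {n k : ℕ} (A : Finset (Fin k)) (z' : Fin k → Fin n → Bool)
    (s : Fin n → Bool) : Fin n → Bool :=
  if h : ∃ j, Inv A z' (flip s j) then flip s h.choose else s

/-- One round of play. -/
noncomputable def play {n k : ℕ} (A : Finset (Fin k)) (mv : GameHist (Fin n → Bool) k → Fin k → Fin n → Bool)
    (z : Fin k → Fin n → Bool) (s : Fin n → Bool) :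
    ℕ → GameHist (Fin n → Bool) k × (Fin k → Fin n → Bool) × (Fin n → Bool)
  | 0 => ([], z, s)
  | t + 1 =>
    let q := play A mv z s t
    let h := q.1 ++ [q.2]
    (h, mv h, resp A (mv h) q.2.2)

lemma lower {n k : ℕ} (hn : 1 ≤ n) (hk : 3 * k < 2 * n) : ¬ ZombiesWinWith (hypercube n) k := by
  rintro ⟨z, hz⟩
  obtain ⟨A, s, hA, hinv⟩ := exists_start hn hk z
  obtain ⟨mv, hmv⟩ := hz s
  let P := play A mv z s
  have hist : ∀ t, (P t).1 = histUpTo (fun t => (P t).2.1) (fun t => (P t).2.2) t := by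
    intro t
    induction t with
    | zero => rfl
    | succ t ih =>
      have : (P (t+1)).1 = (P t).1 ++ [(P t).2] := rfl
      rw [this, ih]
      simp [histUpTo, List.range_succ]
  have hc : ∀ t, (P (t+1)).2.1 = mv (P (t+1)).1 := fun t => rfl
  have hr : ∀ t, (P (t+1)).2.2 = resp A (P (t+1)).2.1 (P t).2.2 := fun t => rfl
  have hleg : RobberLegal (hypercube n) (fun t => (P t).2.2) := by
    intro t
    simp only [hr]
    unfold resp
    split_ifs with h
    · exact Or.inr (adj_iff.2 ⟨_, rfl⟩)
    · exact Or.inl rfl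
  have hI : ∀ t, (∀ m < t, ZombieStepLegal (hypercube n) (fun t => (P t).2.1)
      (fun t => (P t).2.2) m) → Inv A (P t).2.1 (P t).2.2 := by
    intro t
    induction t with
    | zero => intro _; exact hinv
    | succ t ih =>
      intro hl
      have h1 := ih fun m hm => hl m (by omega)
      have h2 := hl t (by omega)
      have h3 := survivor_step hk A hA _ (P (t+1)).2.1 _ h1 fun i => legal_step (h2 i).1 (h2 i).2
      rw [hr]
      unfold resp
      rw [dif_pos h3]
      exact h3.choose_spec
  have h2le : ∀ t, (∀ m < t, ZombieStepLegal (hypercube n) (fun t => (P t).2.1)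
      (fun t => (P t).2.2) m) → ∀ i, 2 ≤ (D ((P t).2.1 i) (P t).2.2).card := by
    intro t ht i
    have := hI t ht
    by_cases hi : i ∈ A
    · have := this.1 i hi; omega
    · exact (this.2 i hi).2
  obtain ⟨t, ⟨⟨i, hi⟩, ht⟩ | ⟨⟨i, hi⟩, ht⟩⟩ := hmv (fun t => (P t).2.1) (fun t => (P t).2.2) rfl rfl
    (fun t => by rw [← hist]; exact hc t) hleg
  · have h1 := h2le t ht i
    have h2 := D_empty.2 hi
    rw [h2] at h1
    simp at h1
  · have h1 := h2le t (fun m hm => ht m hm.le) i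
    have h2 := D_empty.2 hi
    have h3 := legal_step (ht t le_rfl i).1 (ht t le_rfl i).2
    beta_reduce at h2 h3
    rw [h2] at h3
    simp at h3
    omega

/-! ### Upper bound -/

/-- The union of the difference sets. -/
def U {n k : ℕ} (z : Fin k → Fin n → Bool) (s : Fin n → Bool) : Finset (Fin n) :=
  Finset.univ.biUnion fun i => D (z i) s

lemma exists_move {n k : ℕ} (z : Fin k → Fin n → Bool) (s : Fin n → Bool) :
    ∃ z' : Fin k → Fin n → Bool, (∀ i, z i ≠ s) →
      (∃ x : Fin k → Fin n, (∀ i, x i ∈ D (z i) s) ∧ ∀ i, z' i = flip (z i) (x i)) ∧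
      ∀ y : Fin k → Fin n, (∀ i, y i ∈ D (z i) s) →
        (U (fun i => flip (z i) (y i)) s).card ≤ (U z' s).card := by
  by_cases h : ∀ i, z i ≠ s
  · have hne : (Finset.univ.filter fun x : Fin k → Fin n => ∀ i, x i ∈ D (z i) s).Nonempty := by
      have : ∀ i, ∃ j, j ∈ D (z i) s := fun i => Finset.card_pos.1 (card_pos.2 (h i))
      choose x hx using this
      exact ⟨x, by simpa using hx⟩
    obtain ⟨x, hx, hmax⟩ := Finset.exists_max_image _
      (fun x => (U (fun i => flip (z i) (x i)) s).card) hne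
    refine ⟨fun i => flip (z i) (x i), fun _ => ⟨⟨x, by simpa using hx, fun _ => rfl⟩, ?_⟩⟩
    intro y hy
    exact hmax y (by simpa using hy)
  · exact ⟨z, fun h' => absurd h' h⟩

lemma overlap {n k : ℕ} (E : Fin k → Finset (Fin n))
    (h : (Finset.univ.biUnion E).card < ∑ i, (E i).card) :
    ∃ i₀ i₁ e, i₀ ≠ i₁ ∧ e ∈ E i₀ ∧ e ∈ E i₁ := by
  by_contra hcon
  push Not at hcon
  have := Finset.card_biUnion (s := Finset.univ) (t := E) (by
    intro i _ j _ hij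
    change Disjoint (E i) (E j)
    rw [Finset.disjoint_left]
    intro e he he'
    exact hcon i j e hij he he')
  omega

lemma D_flip_left_mem {n : ℕ} {z s : Fin n → Bool} {j : Fin n} (h : j ∈ D z s) :
    D (flip z j) s = (D z s).erase j := by
  rw [D_comm] at h ⊢
  rw [D_flip_mem h, D_comm]

/-- If the survivor flips a coordinate outside the union, the zombies can grow the union. -/
lemma grow {n k : ℕ} (z : Fin k → Fin n → Bool) (s : Fin n → Bool) (j : Fin n)
    (hj : j ∉ U z s) (hsum : n ≤ ∑ i, (D (z i) s).card) :
    ∃ y : Fin k → Fin n, (∀ i, y i ∈ D (z i) (flip s j)) ∧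
      (U z s).card < (U (fun i => flip (z i) (y i)) (flip s j)).card := by
  have hlt : (U z s).card < n := by
    have := Finset.card_lt_univ_of_notMem hj
    simpa using this
  obtain ⟨i₀, i₁, e, hne, he0, he1⟩ := overlap (fun i => D (z i) s) (lt_of_lt_of_le hlt hsum)
  have hj' : ∀ i, j ∉ D (z i) s := by
    intro i hi
    exact hj (Finset.mem_biUnion.2 ⟨i, Finset.mem_univ _, hi⟩)
  have hF : ∀ i, D (z i) (flip s j) = insert j (D (z i) s) := fun i => D_flip_not_mem (hj' i)
  have hje : e ≠ j := by rintro rfl; exact hj' _ he0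
  have hy : ∀ i, (if i = i₀ then e else j) ∈ D (z i) (flip s j) := by
    intro i
    rw [hF]
    split_ifs with h
    · subst h; exact Finset.mem_insert_of_mem he0
    · exact Finset.mem_insert_self _ _
  refine ⟨fun i => if i = i₀ then e else j, hy, ?_⟩
  have hsub : insert j (U z s) ⊆
      U (fun i => flip (z i) (if i = i₀ then e else j)) (flip s j) := by
    intro a ha
    simp only [U, Finset.mem_biUnion, Finset.mem_univ, true_and]
    rcases Finset.mem_insert.1 ha with rfl | ha
    · refine ⟨i₀, ?_⟩
      rw [D_flip_left_mem (hy i₀), hF]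
      simp [hje.symm]
    · obtain ⟨i, -, hi⟩ := Finset.mem_biUnion.1 ha
      have haj : a ≠ j := by rintro rfl; exact hj' _ hi
      by_cases hae : a = e
      · refine ⟨i₁, ?_⟩
        rw [D_flip_left_mem (hy i₁), hF, hae]
        simp [hne.symm, hje, he1]
      · refine ⟨i, ?_⟩
        rw [D_flip_left_mem (hy i), hF]
        split_ifs <;> simp [haj, hae, hi]
  have := Finset.card_le_card hsub
  rw [Finset.card_insert_of_notMem hj] at this
  exact this

lemma sum_range_par (k p : ℕ) : ∑ i ∈ Finset.range k, (1 + (i + p) % 2) = k + (k + p % 2) / 2 := by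
  induction k with
  | zero => rw [Finset.sum_range_zero]; omega
  | succ k ih => rw [Finset.sum_range_succ, ih]; omega

lemma upper {n k : ℕ} (hn : 1 ≤ n) (hk : 2 * n ≤ 3 * k) : ZombiesWinWith (hypercube n) k := by
  choose Z hZ using @exists_move n k
  let z0 : Fin n → Bool := fun _ => false
  refine ⟨fun i => if (i : ℕ) % 2 = 0 then z0 else flip z0 ⟨0, hn⟩, fun spos => ?_⟩
  refine ⟨fun h => match h.getLast? with
    | some q => Z q.1 q.2
    | none => fun _ => z0, ?_⟩
  intro c r hc0 hr0 hf hrl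
  have hstep : ∀ t, c (t+1) = Z (c t) (r t) := by
    intro t
    rw [hf t]
    simp [histUpTo, List.range_succ]
  by_contra hcon
  push Not at hcon
  have hlegal : ∀ t, (∀ i, c t i ≠ r t) → ZombieStepLegal (hypercube n) c r t := by
    intro t ht i
    obtain ⟨⟨x, hx, hzx⟩, -⟩ := hZ (c t) (r t) ht
    rw [hstep, hzx]
    refine ⟨adj_iff.2 ⟨_, rfl⟩, ?_⟩
    rw [dist_eq, dist_eq, D_flip_left_mem (hx i)]
    exact Finset.card_erase_lt_of_mem (hx i)
  have hall : ∀ t, (∀ m < t, ZombieStepLegal (hypercube n) c r m) := by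
    intro t
    induction t with
    | zero => intro m hm; omega
    | succ t ih =>
      intro m hm
      rcases Nat.lt_succ_iff_lt_or_eq.1 hm with h | rfl
      · exact ih m h
      · apply hlegal
        intro i hi
        obtain ⟨m', hm', hb⟩ := (hcon m).1 ⟨i, hi⟩
        exact hb (ih m' hm')
  have hleg : ∀ t, ZombieStepLegal (hypercube n) c r t := fun t => hall (t+1) t (by omega)
  have hne : ∀ t i, c t i ≠ r t := by
    intro t i hi
    obtain ⟨m', hm', hb⟩ := (hcon t).1 ⟨i, hi⟩
    exact hb (hleg m')
  have hne' : ∀ t i, c (t+1) i ≠ r t := by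
    intro t i hi
    obtain ⟨m', hm', hb⟩ := (hcon t).2 ⟨i, hi⟩
    exact hb (hleg m')
  have hdec : ∀ t i, (D (c (t+1) i) (r t)).card + 1 = (D (c t i) (r t)).card :=
    fun t i => legal_step (hleg t i).1 (hleg t i).2
  have hrob : ∀ t, r (t+1) = r t ∨ ∃ j, r (t+1) = flip (r t) j := by
    intro t
    rcases hrl t with h | h
    · exact Or.inl h
    · exact Or.inr (adj_iff.1 h)
  have hpar : ∀ t, ∃ p, ∀ i : Fin k, (D (c t i) (r t)).card % 2 = (i + p) % 2 := by
    intro t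
    induction t with
    | zero =>
      refine ⟨(D z0 (r 0)).card, fun i => ?_⟩
      rw [hc0]
      have := card_flip_left z0 (r 0) ⟨0, hn⟩
      simp only
      split_ifs <;> omega
    | succ t ih =>
      obtain ⟨p, hp⟩ := ih
      rcases hrob t with h | ⟨j, h⟩
      · refine ⟨p + 1, fun i => ?_⟩
        have := hp i
        have := hdec t i
        rw [h]; omega
      · refine ⟨p, fun i => ?_⟩
        have := hp i
        have := hdec t i
        have := card_flip (c (t+1) i) (r t) j
        rw [h]; omega
  have hsum : ∀ t, n ≤ ∑ i, (D (c (t+1) i) (r t)).card := by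
    intro t
    obtain ⟨p, hp⟩ := hpar t
    have h1 : ∑ i : Fin k, (1 + ((i : ℕ) + p) % 2) ≤ ∑ i, (D (c (t+1) i) (r t)).card := by
      apply Finset.sum_le_sum
      intro i _
      have := hp i
      have := hdec t i
      have := card_pos.2 (hne' t i)
      omega
    rw [Fin.sum_univ_eq_sum_range (fun i => 1 + (i + p) % 2), sum_range_par] at h1
    omega
  let S : ℕ → ℕ := fun t => ∑ i, (D (c (t+1) i) (r t)).card
  let W : ℕ → ℕ := fun t => (U (c (t+1)) (r t)).card
  have hW : ∀ t, W t ≤ n := fun t => (Finset.card_le_univ _).trans (by simp)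
  have hprog : ∀ t, S (t+1) < S t ∨ (S (t+1) ≤ S t ∧ W t < W (t+1)) := by
    intro t
    have hkpos : 0 < k := by omega
    rcases hrob t with h | ⟨j, h⟩
    · left
      apply Finset.sum_lt_sum_of_nonempty ⟨⟨0, hkpos⟩, Finset.mem_univ _⟩
      intro i _
      have := hdec (t+1) i
      rw [h] at this ⊢
      omega
    · have hle : ∀ i, (D (c (t+1+1) i) (r (t+1))).card ≤ (D (c (t+1) i) (r t)).card := by
        intro i
        have h1 := hdec (t+1) i
        have h2 := card_flip (c (t+1) i) (r t) j
        rw [h] at h1 ⊢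
        omega
      by_cases hj : j ∈ U (c (t+1)) (r t)
      · left
        obtain ⟨i, -, hi⟩ := Finset.mem_biUnion.1 hj
        apply Finset.sum_lt_sum (fun i _ => hle i) ⟨i, Finset.mem_univ _, ?_⟩
        have h1 := hdec (t+1) i
        have h2 := card_flip (c (t+1) i) (r t) j
        rw [h] at h1 ⊢
        simp only [hi, true_and, not_true, false_and, or_false] at h2
        omega
      · right
        refine ⟨Finset.sum_le_sum fun i _ => hle i, ?_⟩
        obtain ⟨y, hy, hlt⟩ := grow _ _ j hj (hsum t)
        rw [← h] at hy hlt
        have := (hZ (c (t+1)) (r (t+1)) (hne (t+1))).2 y hy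
        rw [← hstep] at this
        exact lt_of_lt_of_le hlt this
  have hphi : ∀ t, (n + 1) * S t + (n - W t) + t ≤ (n + 1) * S 0 + (n - W 0) := by
    intro t
    induction t with
    | zero => simp
    | succ t ih =>
      have h0 := hW t
      have h1 := hW (t+1)
      rcases hprog t with h | ⟨h, h'⟩
      · have : (n + 1) * (S (t+1) + 1) ≤ (n + 1) * S t := Nat.mul_le_mul_left _ h
        rw [mul_add] at this
        omega
      · have : (n + 1) * S (t+1) ≤ (n + 1) * S t := Nat.mul_le_mul_left _ h
        omega
  have := hphi ((n + 1) * S 0 + (n - W 0) + 1)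
  omega

end HZ

/-- For every `n ≥ 1`, the zombie number of the `n`-dimensional hypercube is
`z(Q_n) = ⌈2n/3⌉`. -/
theorem zombie_number_hypercube (n : ℕ) (hn : 1 ≤ n) :
    zombieNumber (hypercube n) = (2 * n + 2) / 3 := by
  have hmem : (2 * n + 2) / 3 ∈ {k | ZombiesWinWith (hypercube n) k} :=
    HZ.upper hn (by omega)
  apply le_antisymm
  · exact Nat.sInf_le hmem
  · apply le_csInf ⟨_, hmem⟩
    intro k hk
    by_contra hlt
    exact HZ.lower hn (by omega) hk
end
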